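/- arXiv:2007.14468 — 12 statements merged into one kernel-verified Lean document; each statement's English description precedes it below -/
import Mathlib

section
/- Let n ≥ 3, let d ≥ 1, and let S = {a₁, a₂, …, a_t} be a subset of ℤ_n. Let S' = {d·a₁, d·a₂, …, d·a_t} be the corresponding subset of ℤ_{dn}. Then the polychromatic number of S' in ℤ_{dn} equals the polychromatic number of S in ℤ_n, i.e., p_{dn}(S') = p_n(S). -/
/-!
For each `k`, an `S`-polychromatic `k`-coloring of `ZMod n` exists iff an `S'`-polychromatic one of
`ZMod (d * n)` exists, so the two suprema are taken over the same set. Multiplication by `d` is an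
additive map `ZMod n → ZMod (d * n)`, so a coloring upstairs pulls back along it
(`dilate_add`). Conversely, the coset decomposition `y = d * q + r` with `r < d` gives a quotient
map `y ↦ q`, and a coloring downstairs pulls back along it, because translating `y` by `d * s`
translates `q` by `s` (`quot_add_dilate`).
-/

/-- A coloring `χ` of `ZMod n` with `k` colors is `S`-polychromatic if every
translate `a + S` of `S` contains an element of each of the `k` colors. -/
def IsPolyColoring {n k : ℕ} (S : Set (ZMod n)) (χ : ZMod n → Fin k) : Prop :=
  ∀ a : ZMod n, ∀ c : Fin k, ∃ s ∈ S, χ (a + s) = c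

/-- The polychromatic number of `S` in `ZMod n`: the largest `k` such that
there is an `S`-polychromatic coloring of `ZMod n` with `k` colors. -/
noncomputable def polyNum (n : ℕ) (S : Set (ZMod n)) : ℕ :=
  sSup {k : ℕ | ∃ χ : ZMod n → Fin k, IsPolyColoring S χ}

/-- Multiplication by `d` on representatives is additive from `ZMod n` to `ZMod (d * n)`. -/
lemma dilate_add {n d : ℕ} [NeZero n] (a s : ZMod n) :
    ((d * (a + s).val : ℕ) : ZMod (d * n)) =
      ((d * a.val : ℕ) : ZMod (d * n)) + ((d * s.val : ℕ) : ZMod (d * n)) := by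
  rw [ZMod.val_add, ← Nat.mul_mod_mul_left, ZMod.natCast_mod, mul_add, Nat.cast_add]

/-- The quotient by `d` of a representative, read modulo `n`, moves by `s` under translation
by `d * s`. -/
lemma quot_add_dilate {n d : ℕ} [NeZero n] [NeZero (d * n)] (hd : 0 < d)
    (y : ZMod (d * n)) (s : ZMod n) :
    (((y + ((d * s.val : ℕ) : ZMod (d * n))).val / d : ℕ) : ZMod n) =
      ((y.val / d : ℕ) : ZMod n) + s := by
  rw [ZMod.val_add, ZMod.val_natCast, Nat.add_mod_mod, Nat.mod_mul_right_div_self,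
    ZMod.natCast_mod, Nat.add_mul_div_left _ _ hd, Nat.cast_add, ZMod.natCast_zmod_val]

/-- If `n ≥ 3`, `d ≥ 1`, `S ⊆ ZMod n`, and `S'` is the subset of
`ZMod (d*n)` obtained by multiplying (representatives of) elements of `S` by `d`,
then `p_{dn}(S') = p_n(S)`. -/
theorem polyNum_mul_dilate (n d : ℕ) (hn : 3 ≤ n) (hd : 1 ≤ d)
    (S : Set (ZMod n)) (S' : Set (ZMod (d * n)))
    (hS' : S' = (fun x : ZMod n => ((d * x.val : ℕ) : ZMod (d * n))) '' S) :
    polyNum (d * n) S' = polyNum n S := by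
  have : NeZero n := ⟨by omega⟩
  have : NeZero (d * n) := ⟨Nat.mul_ne_zero (by omega) (by omega)⟩
  subst hS'
  unfold polyNum
  congr 1
  ext k
  constructor
  · rintro ⟨χ, hχ⟩
    refine ⟨fun x => χ ((d * x.val : ℕ) : ZMod (d * n)), fun a c => ?_⟩
    obtain ⟨_, ⟨s, hs, rfl⟩, h⟩ := hχ ((d * a.val : ℕ) : ZMod (d * n)) c
    exact ⟨s, hs, by simpa only [dilate_add] using h⟩
  · rintro ⟨χ, hχ⟩
    refine ⟨fun y => χ ((y.val / d : ℕ) : ZMod n), fun a c => ?_⟩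
    obtain ⟨s, hs, h⟩ := hχ ((a.val / d : ℕ) : ZMod n) c
    exact ⟨_, ⟨s, hs, rfl⟩, by simpa only [quot_add_dilate hd] using h⟩
end

section
/- Let S = {0, a, b} ⊆ ℤ_n with gcd(a, b, n) = 1. Then at least one of the following holds: (i) S is equivalent in ℤ_n to a set S' = {0, 1, b'} where (the least nonnegative representative of) b' is at most ⌈n/2⌉; or (ii) gcd(a, n) ≠ 1, gcd(b, n) ≠ 1, a is not in the cyclic subgroup of ℤ_n generated by b, and b is not in the cyclic subgroup of ℤ_n generated by a. -/
/-!
If `a` is a unit, scaling by `a⁻¹` turns `{0, a, b}` into `{0, 1, x}` with `x = a⁻¹ b`. The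
reflection `y ↦ 1 - y` swaps `0` and `1` and sends `x` to `1 - x`; when `x.val ≥ 2` the
representatives of `x` and `1 - x` add up to `n + 1`, so one of them is at most `⌈n/2⌉`.
By symmetry the same holds if `b` is a unit. Finally, if `a ∈ ⟨b⟩`, then `gcd(b, n)` divides `a`
too, hence divides `gcd(a, b, n) = 1`, so `b` is a unit. Thus whenever (ii) fails, `a` or `b` is
a unit, and (i) holds.
-/

/-- Two subsets `S`, `S'` of `ZMod n` are equivalent if `S' = {d·x + c | x ∈ S}`
for some `c, d ∈ ZMod n` with `gcd(d, n) = 1`. -/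
def EquivSets (n : ℕ) (S S' : Set (ZMod n)) : Prop :=
  ∃ c d : ZMod n, Nat.gcd d.val n = 1 ∧ S' = (fun x : ZMod n => d * x + c) '' S

theorem isUnit_iff_gcd_val {n : ℕ} [NeZero n] (d : ZMod n) :
    IsUnit d ↔ Nat.gcd d.val n = 1 := by
  rw [← Nat.coprime_iff_gcd_eq_one, ← ZMod.isUnit_iff_coprime, ZMod.natCast_zmod_val]

/-- Of the two elements `x` and `1 - x`, exchanged by the reflection `y ↦ 1 - y`, one has
least nonnegative representative at most `⌈n/2⌉`. -/
theorem val_le_or_val_one_sub_le {n : ℕ} [NeZero n] (x : ZMod n) :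
    x.val ≤ (n + 1) / 2 ∨ (1 - x).val ≤ (n + 1) / 2 := by
  by_cases hx : x.val ≤ (n + 1) / 2
  · exact Or.inl hx
  right
  have hlt := x.val_lt
  have h : (1 - x) = ((n + 1 - x.val : ℕ) : ZMod n) := by
    rw [Nat.cast_sub (by omega)]
    simp
  rw [h, ZMod.val_natCast, Nat.mod_eq_of_lt (by omega)]
  omega

theorem exists_equivSets_of_isUnit {n : ℕ} [NeZero n] {a : ZMod n} (b : ZMod n)
    (ha : IsUnit a) :
    ∃ b' : ZMod n, b'.val ≤ (n + 1) / 2 ∧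
      EquivSets n {0, a, b} ({0, 1, b'} : Set (ZMod n)) := by
  obtain ⟨u, rfl⟩ := ha
  rcases val_le_or_val_one_sub_le ((↑u⁻¹ : ZMod n) * b) with h | h
  · refine ⟨_, h, 0, (↑u⁻¹ : ZMod n), (isUnit_iff_gcd_val _).1 u⁻¹.isUnit, ?_⟩
    simp [Set.image_insert_eq]
  · refine ⟨_, h, 1, -(↑u⁻¹ : ZMod n), (isUnit_iff_gcd_val _).1 u⁻¹.isUnit.neg, ?_⟩
    rw [Set.image_insert_eq, Set.image_pair, Set.insert_comm]
    simp [sub_eq_neg_add]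

/-- If `a` is a multiple of `b`, then `gcd(b, n)` divides `gcd(a, b, n)`. -/
theorem isUnit_of_mem_zmultiples {n : ℕ} [NeZero n] {a b : ZMod n}
    (hgcd : Nat.gcd a.val (Nat.gcd b.val n) = 1) (h : a ∈ AddSubgroup.zmultiples b) :
    IsUnit b := by
  obtain ⟨k, hk⟩ := AddSubgroup.mem_zmultiples_iff.1 h
  have hn : (n : ℤ) ∣ (a.val : ℤ) - k * b.val := by
    rw [← ZMod.intCast_zmod_eq_zero_iff_dvd]
    simp [← hk]
  have hga : Nat.gcd b.val n ∣ a.val := by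
    have h1 : ((Nat.gcd b.val n : ℕ) : ℤ) ∣ (a.val : ℤ) - k * b.val :=
      (Int.natCast_dvd_natCast.2 (Nat.gcd_dvd_right _ _)).trans hn
    have h2 : ((Nat.gcd b.val n : ℕ) : ℤ) ∣ k * b.val :=
      (Int.natCast_dvd_natCast.2 (Nat.gcd_dvd_left _ _)).mul_left k
    exact Int.natCast_dvd_natCast.1 ((dvd_sub_left h2).1 h1)
  rw [isUnit_iff_gcd_val]
  rwa [Nat.gcd_eq_right hga] at hgcd


/-- If `S = {0, a, b} ⊆ ZMod n` with `gcd(a, b, n) = 1`, then either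
(i) `S` is equivalent to `{0, 1, b'}` with the least nonnegative representative of `b'`
at most `⌈n/2⌉`, or (ii) `gcd(a,n) ≠ 1`, `gcd(b,n) ≠ 1`, `a ∉ ⟨b⟩`, and `b ∉ ⟨a⟩`. -/
theorem reduce_zero_a_b (n : ℕ) (hn : 0 < n) (a b : ZMod n)
    (hgcd : Nat.gcd a.val (Nat.gcd b.val n) = 1) :
    (∃ b' : ZMod n, b'.val ≤ (n + 1) / 2 ∧
        EquivSets n {0, a, b} ({0, 1, b'} : Set (ZMod n))) ∨
    (Nat.gcd a.val n ≠ 1 ∧ Nat.gcd b.val n ≠ 1 ∧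
        a ∉ AddSubgroup.zmultiples b ∧ b ∉ AddSubgroup.zmultiples a) := by
  have : NeZero n := ⟨hn.ne'⟩
  have hswap : Nat.gcd b.val (Nat.gcd a.val n) = 1 := by rwa [Nat.gcd_left_comm]
  by_cases ha : IsUnit a
  · exact Or.inl (exists_equivSets_of_isUnit b ha)
  by_cases hb : IsUnit b
  · left
    rw [Set.pair_comm a b]
    exact exists_equivSets_of_isUnit a hb
  · right
    exact ⟨fun h => ha ((isUnit_iff_gcd_val a).2 h), fun h => hb ((isUnit_iff_gcd_val b).2 h),
      fun h => hb (isUnit_of_mem_zmultiples hgcd h),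
      fun h => ha (isUnit_of_mem_zmultiples hswap h)⟩
end

section
/- Let n ≥ 3 and let S = {0, a, b} ⊆ ℤ_n with a ≠ b, a ≠ 0, b ≠ 0, and gcd(a, b, n) = 1. Then p_n(S) = 3 if 3 divides n and a and b lie in different nonzero congruence classes mod 3; p_n(S) = 1 if n = 7 and {0, a, b} is equivalent to {0, 1, 3}; and p_n(S) = 2 in all other cases. -/
/-- `a` and `b` lie in different nonzero congruence classes mod 3: their least
nonnegative representatives are `≡ 1` and `≡ 2 (mod 3)` in some order. -/
def DiffNonzeroMod3 {n : ℕ} (a b : ZMod n) : Prop :=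
  (a.val % 3 = 1 ∧ b.val % 3 = 2) ∨ (a.val % 3 = 2 ∧ b.val % 3 = 1)

/-! ### The polychromatic number from existence of colorings -/

/-- There is an `S`-polychromatic coloring with `k` colors. -/
def HasPoly (n : ℕ) (S : Set (ZMod n)) (k : ℕ) : Prop :=
  ∃ χ : ZMod n → Fin k, IsPolyColoring S χ

/-- Colors may be merged: all colors from `j - 1` on become one. -/
lemma HasPoly.mono {n : ℕ} {S : Set (ZMod n)} {k j : ℕ} (h : HasPoly n S k) (hj : 1 ≤ j)
    (hjk : j ≤ k) : HasPoly n S j := by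
  obtain ⟨χ, hχ⟩ := h
  refine ⟨fun x => ⟨min (χ x).val (j - 1), by omega⟩, fun x c => ?_⟩
  obtain ⟨s, hs, he⟩ := hχ x ⟨c.val, by omega⟩
  refine ⟨s, hs, ?_⟩
  ext
  simp only [he]
  omega

lemma polyNum_eq {n : ℕ} {S : Set (ZMod n)} {k : ℕ} (h : HasPoly n S k)
    (h' : ¬ HasPoly n S (k + 1)) : polyNum n S = k := by
  have hub : ∀ j ∈ {k : ℕ | ∃ χ : ZMod n → Fin k, IsPolyColoring S χ}, j ≤ k := by
    intro j hj
    by_contra hlt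
    exact h' (HasPoly.mono (k := j) hj (by omega) (by omega))
  exact le_antisymm (csSup_le ⟨k, h⟩ hub) (le_csSup ⟨k, hub⟩ h)

lemma hasPoly_one {n : ℕ} (a b : ZMod n) : HasPoly n {0, a, b} 1 :=
  ⟨fun _ => 0, fun _ _ => ⟨0, by simp, Subsingleton.elim _ _⟩⟩

lemma not_hasPoly_four {n : ℕ} (a b : ZMod n) : ¬ HasPoly n {0, a, b} 4 := by
  rintro ⟨χ, hχ⟩
  have key : ∀ c : Fin 4, c = χ 0 ∨ c = χ a ∨ c = χ b := by
    intro c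
    obtain ⟨s, hs, he⟩ := hχ 0 c
    rw [zero_add] at he
    rcases hs with rfl | rfl | rfl <;> simp [he]
  generalize χ 0 = p, χ a = q, χ b = r at key
  revert p q r
  decide

/-! ### Three colors -/

lemma exists_bezout {n : ℕ} {a b : ZMod n} [NeZero n]
    (hgcd : Nat.gcd a.val (Nat.gcd b.val n) = 1) : ∃ u v : ZMod n, u * a + v * b = 1 := by
  have h1 := Nat.gcd_eq_gcd_ab a.val (Nat.gcd b.val n)
  have h2 := Nat.gcd_eq_gcd_ab b.val n
  rw [hgcd, h2] at h1
  have h3 := congrArg (Int.cast : ℤ → ZMod n) h1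
  push_cast [ZMod.natCast_zmod_val, ZMod.natCast_self] at h3
  refine ⟨(Nat.gcdA a.val (Nat.gcd b.val n) : ZMod n),
    (Nat.gcdA b.val n : ZMod n) * (Nat.gcdB a.val (Nat.gcd b.val n) : ZMod n), ?_⟩
  rw [h3]
  ring

lemma hasPoly_three {n : ℕ} [NeZero n] {a b : ZMod n} (h3 : 3 ∣ n) (h : DiffNonzeroMod3 a b) :
    HasPoly n {0, a, b} 3 := by
  refine ⟨fun x => ⟨x.val % 3, Nat.mod_lt _ (by norm_num)⟩, fun x c => ?_⟩
  have hv : ∀ s : ZMod n, (x + s).val % 3 = (x.val + s.val) % 3 := by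
    intro s
    rw [ZMod.val_add, Nat.mod_mod_of_dvd _ h3]
  have h0 := hv 0
  have h1 := hv a
  have h2 := hv b
  rw [ZMod.val_zero] at h0
  have hc := c.isLt
  have : (x + 0).val % 3 = c.val ∨ (x + a).val % 3 = c.val ∨ (x + b).val % 3 = c.val := by
    rcases h with h | h <;> omega
  rcases this with h | h | h
  · exact ⟨0, by simp, Fin.ext h⟩
  · exact ⟨a, by simp, Fin.ext h⟩
  · exact ⟨b, by simp, Fin.ext h⟩

/-- The subgroup of periods of a function on `ZMod n`. -/
def periodSubgroup {n : ℕ} {α : Type*} (χ : ZMod n → α) : AddSubgroup (ZMod n) where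
  carrier := {h | ∀ x, χ (x + h) = χ x}
  zero_mem' := by simp
  add_mem' := by
    intro g h hg hh x
    rw [← add_assoc, hh, hg]
  neg_mem' := by
    intro h hh x
    rw [← hh (x + -h), neg_add_cancel_right]

lemma of_hasPoly_three {n : ℕ} [NeZero n] {a b : ZMod n}
    (hgcd : Nat.gcd a.val (Nat.gcd b.val n) = 1) (h : HasPoly n {0, a, b} 3) :
    3 ∣ n ∧ DiffNonzeroMod3 a b := by
  obtain ⟨χ, hχ⟩ := h
  have key : ∀ x, χ x ≠ χ (x + a) ∧ χ x ≠ χ (x + b) ∧ χ (x + a) ≠ χ (x + b) := by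
    intro x
    have hc : ∀ c : Fin 3, c = χ x ∨ c = χ (x + a) ∨ c = χ (x + b) := by
      intro c
      obtain ⟨s, hs, he⟩ := hχ x c
      rcases hs with rfl | rfl | rfl
      · rw [add_zero] at he; simp [he]
      · simp [he]
      · simp [he]
    generalize χ x = p, χ (x + a) = q, χ (x + b) = r at hc
    revert p q r
    decide
  set P := periodSubgroup χ with hP
  have hsum : a + b ∈ P := by
    intro x
    have e1 := key x
    have e2 := key (x + a)
    have e3 := key (x + b)
    rw [add_right_comm x b a] at e3
    rw [← add_assoc]
    generalize χ x = p, χ (x + a) = q, χ (x + b) = r, χ (x + a + b) = s, χ (x + a + a) = t,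
      χ (x + b + b) = w at *
    omega
  have htwo : 2 * a - b ∈ P := by
    intro x
    have e1 := key (x - b)
    have e2 := key (x - b + a)
    have hs := hsum (x - b)
    rw [sub_add_cancel] at e1
    rw [← add_assoc] at hs
    rw [show x + (2 * a - b) = x - b + a + a by ring]
    generalize χ x = p, χ (x - b) = q, χ (x - b + a) = r, χ (x - b + a + b) = s,
      χ (x - b + a + a) = t at *
    omega
  have haP : a ∉ P := fun h => (key 0).1 (h 0).symm
  have hbP : b ∉ P := fun h => (key 0).2.1 (h 0).symm
  have hmul : ∀ w h : ZMod n, h ∈ P → w * h ∈ P := by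
    intro w h hh
    have := P.nsmul_mem hh w.val
    rwa [nsmul_eq_mul, ZMod.natCast_zmod_val] at this
  have hthree : (3 : ZMod n) ∈ P := by
    obtain ⟨u, v, huv⟩ := exists_bezout hgcd
    have e : (3 : ZMod n) = (u - v) * ((a + b) + (2 * a - b)) + 3 * v * (a + b) := by
      linear_combination (-3) * huv
    rw [e]
    exact P.add_mem (hmul _ _ (P.add_mem hsum htwo)) (hmul _ _ hsum)
  have hone : (1 : ZMod n) ∉ P := fun h => haP (by simpa using hmul a 1 h)
  -- A natural number is a period exactly when it is divisible by `3`.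
  have hdvd : ∀ k : ℕ, (k : ZMod n) ∈ P ↔ 3 ∣ k := by
    intro k
    have hdiv : (k : ZMod n) = ((k % 3 : ℕ) : ZMod n) + ((k / 3 : ℕ) : ZMod n) * 3 := by
      exact_mod_cast congrArg (Nat.cast : ℕ → ZMod n) (show k = k % 3 + k / 3 * 3 by omega)
    constructor
    · intro hk
      have hr : ((k % 3 : ℕ) : ZMod n) ∈ P := by
        rw [eq_sub_of_add_eq hdiv.symm]
        exact P.sub_mem hk (hmul _ _ hthree)
      have : k % 3 = 0 ∨ k % 3 = 1 ∨ k % 3 = 2 := by omega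
      rcases this with h | h | h
      · omega
      · rw [h] at hr; exact absurd (by simpa using hr) hone
      · rw [h] at hr
        exact absurd (by simpa [show (3 : ZMod n) - 2 = 1 by ring] using P.sub_mem hthree hr) hone
    · rintro ⟨l, rfl⟩
      push_cast
      rw [mul_comm]
      exact hmul _ _ hthree
  have hn : 3 ∣ n := (hdvd n).1 (by simp [P.zero_mem])
  have hA := (hdvd a.val).not.1 (by simpa using haP)
  have hB := (hdvd b.val).not.1 (by simpa using hbP)
  have hAB := (hdvd (a.val + b.val)).1 (by simpa using hsum)
  refine ⟨hn, ?_⟩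
  unfold DiffNonzeroMod3
  omega

/-! ### Two colors: reductions and the parity coloring -/

/-- `ZMod n` has a 2-coloring, given by the parity of `f`, in which no translate of `{0, a, b}` is
monochromatic. -/
def TwoColorable {n : ℕ} (a b : ZMod n) : Prop :=
  ∃ f : ZMod n → ℕ, ∀ x, ¬(f x % 2 = f (x + a) % 2 ∧ f x % 2 = f (x + b) % 2)

lemma hasPoly_two_iff {n : ℕ} {a b : ZMod n} : HasPoly n {0, a, b} 2 ↔ TwoColorable a b := by
  constructor
  · rintro ⟨χ, hχ⟩
    refine ⟨fun x => (χ x).val, fun x hx => ?_⟩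
    obtain ⟨s, hs, h0⟩ := hχ x 0
    obtain ⟨s', hs', h1⟩ := hχ x 1
    have h0' : (χ (x + s)).val = 0 := by rw [h0]; rfl
    have h1' : (χ (x + s')).val = 1 := by rw [h1]; rfl
    have hz : (χ (x + 0)).val = (χ x).val := by rw [add_zero]
    dsimp only at hx
    rcases hs with rfl | rfl | rfl <;> rcases hs' with rfl | rfl | rfl <;> omega
  · rintro ⟨f, hf⟩
    refine ⟨fun x => ⟨f x % 2, Nat.mod_lt _ (by norm_num)⟩, fun x c => ?_⟩
    have h := hf x
    have hc := c.isLt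
    have : f (x + 0) % 2 = c.val ∨ f (x + a) % 2 = c.val ∨ f (x + b) % 2 = c.val := by
      rw [add_zero]; omega
    rcases this with h | h | h
    · exact ⟨0, by simp, Fin.ext h⟩
    · exact ⟨a, by simp, Fin.ext h⟩
    · exact ⟨b, by simp, Fin.ext h⟩

lemma TwoColorable.swap {n : ℕ} {a b : ZMod n} (h : TwoColorable a b) : TwoColorable b a := by
  obtain ⟨f, hf⟩ := h
  exact ⟨f, fun x hx => hf x hx.symm⟩

lemma TwoColorable.scale {n : ℕ} {a b d e : ZMod n} (hde : e * d = 1) (h : TwoColorable a b) :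
    TwoColorable (d * a) (d * b) := by
  obtain ⟨f, hf⟩ := h
  refine ⟨fun x => f (e * x), fun x => ?_⟩
  have h1 : e * (x + d * a) = e * x + a := by linear_combination a * hde
  have h2 : e * (x + d * b) = e * x + b := by linear_combination b * hde
  simpa only [h1, h2] using hf (e * x)

lemma TwoColorable.reflect {n : ℕ} {b : ZMod n} (h : TwoColorable 1 (1 - b)) :
    TwoColorable 1 b := by
  obtain ⟨f, hf⟩ := h
  refine ⟨fun x => f (-x), fun x hx => hf (-(x + 1)) ?_⟩
  have h1 : -(x + 1) + 1 = -x := by ring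
  have h2 : -(x + 1) + (1 - b) = -(x + b) := by ring
  rw [h1, h2]
  dsimp only at hx
  omega

lemma twoColorable_of_even {n : ℕ} [NeZero n] {a b : ZMod n} (hn : 2 ∣ n)
    (ha : a.val % 2 = 1) : TwoColorable a b := by
  refine ⟨fun x => x.val, fun x hx => ?_⟩
  have h := hx.1
  simp only [ZMod.val_add, Nat.mod_mod_of_dvd _ hn] at h
  omega

lemma twoColorable_one_of_even {n : ℕ} {b : ZMod n} (hn : 3 ≤ n)
    (hodd : n % 2 = 1) (hb : b ≠ 0) (he : b.val % 2 = 0) : TwoColorable 1 b := by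
  have : NeZero n := ⟨by omega⟩
  have : Fact (1 < n) := ⟨by omega⟩
  refine ⟨fun x => x.val, fun x hx => ?_⟩
  have hx1 := x.val_lt
  have hb1 := b.val_lt
  have hb0 : b.val ≠ 0 := fun h => hb ((ZMod.val_eq_zero b).1 h)
  simp only [ZMod.val_add, ZMod.val_one] at hx
  rcases Nat.lt_or_ge (x.val + 1) n with h1 | h1
  · rw [Nat.mod_eq_of_lt h1] at hx; omega
  · rw [Nat.mod_eq_sub_mod (by omega : n ≤ x.val + b.val),
      Nat.mod_eq_of_lt (by omega : x.val + b.val - n < n)] at hx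
    omega

/-! ### Two colors: `{0, 1, b}` with `b` odd -/

/-- For `n ≤ 3(b-1)` take `r = 3`; otherwise the least odd `r` with `n ≤ r(b-1)` works. -/
lemma exists_odd_ratio {n b : ℕ} (hn : n % 2 = 1) (hb : b % 2 = 1) (hb3 : 3 ≤ b)
    (hbn : 2 * b ≤ n + 1) (h7 : n ≠ 7) :
    ∃ r, r % 2 = 1 ∧ n ≤ r * (b - 1) ∧ r * b ≤ 2 * n := by
  obtain ⟨c, rfl⟩ : ∃ c, b = c + 1 := ⟨b - 1, by omega⟩
  rw [Nat.add_sub_cancel]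
  by_cases h : n ≤ 3 * c ∧ 3 * (c + 1) ≤ 2 * n
  · exact ⟨3, rfl, h.1, h.2⟩
  have hn3 : 3 * c < n := by
    by_contra h'
    exact h ⟨by omega, by omega⟩
  have hex : ∃ k, n ≤ (2 * k + 1) * c := ⟨n, by nlinarith⟩
  classical
  have hs := Nat.find_spec hex
  have hm := fun k => Nat.find_min hex (m := k)
  generalize Nat.find hex = k at hs hm
  have hk : 1 ≤ k := by
    by_contra h0
    obtain rfl : k = 0 := by omega
    omega
  obtain ⟨l, rfl⟩ : ∃ l, k = l + 1 := ⟨k - 1, by omega⟩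
  have hl := hm l (by omega)
  refine ⟨2 * (l + 1) + 1, by omega, hs, ?_⟩
  rcases Nat.lt_or_ge c 4 with hc | hc
  · obtain rfl : c = 2 := by omega
    omega
    -- Multiplied by `c = b - 1`, the claim reads `r c (c + 1) ≤ 2 n c`, where `r c < n + 2 c`.
  · have h1 : (2 * (l + 1) + 1) * c + 1 ≤ n + 2 * c := by nlinarith
    have h2 : ((2 * (l + 1) + 1) * (c + 1)) * c ≤ (2 * n) * c := by nlinarith
    exact Nat.le_of_mul_le_mul_right h2 (by omega)

lemma twoColorable_one_of_ratio {n B r : ℕ} (hn : 3 ≤ n) (hodd : n % 2 = 1) (hB : B % 2 = 1)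
    (hr : r % 2 = 1) (hB2 : 2 ≤ B) (h1 : n ≤ r * (B - 1)) (h2 : r * B ≤ 2 * n) :
    TwoColorable (1 : ZMod n) (B : ZMod n) := by
  have : NeZero n := ⟨by omega⟩
  -- The coloring on `ℕ`, which has period `n` modulo `2`.
  let F : ℕ → ℕ := fun x => x + x * r / n
  have hper : ∀ x k, F (x + n * k) % 2 = F x % 2 := by
    intro x k
    have : (x + n * k) * r / n = x * r / n + k * r := by
      rw [show (x + n * k) * r = x * r + n * (k * r) by ring,
        Nat.add_mul_div_left _ _ (by omega)]
    simp only [F, this]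
    have e : x + n * k + (x * r / n + k * r) = x + x * r / n + k * (n + r) := by ring
    rw [e]
    have : (n + r) % 2 = 0 := by omega
    rw [Nat.add_mod, Nat.mul_mod, this]
    simp
  have hval : ∀ m : ℕ, F ((m : ZMod n).val) % 2 = F m % 2 := by
    intro m
    rw [ZMod.val_natCast]
    conv_rhs => rw [← Nat.mod_add_div m n]
    exact (hper _ _).symm
  refine ⟨fun x => F x.val, fun x hx => ?_⟩
  obtain ⟨m, rfl⟩ : ∃ m : ℕ, x = (m : ZMod n) := ⟨x.val, by simp⟩
  have c1 : (m : ZMod n) + 1 = ((m + 1 : ℕ) : ZMod n) := by push_cast; rfl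
  have c2 : (m : ZMod n) + (B : ZMod n) = ((m + B : ℕ) : ZMod n) := by push_cast; rfl
  simp only [c1, c2, hval] at hx
  simp only [F] at hx
  obtain ⟨C, rfl⟩ : ∃ C, B = C + 1 := ⟨B - 1, by omega⟩
  rw [Nat.add_sub_cancel] at h1
  have hrn : r ≤ n := by nlinarith
  have hdm := Nat.div_add_mod (m * r) n
  have hf := Nat.mod_lt (m * r) (show 0 < n by omega)
  generalize m * r / n = d, m * r % n = f at *
  rcases Nat.lt_or_ge (f + r) n with hlt | hge
  · have e : (m + 1) * r / n = d := by
      rw [show (m + 1) * r = f + r + n * d by linarith, Nat.add_mul_div_left _ _ (by omega),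
        Nat.div_eq_of_lt hlt, zero_add]
    omega
  · have e : (m + (C + 1)) * r / n = d + 2 := by
      rw [show (m + (C + 1)) * r = (f + r + r * C) + n * d by linarith,
        Nat.add_mul_div_left _ _ (by omega), Nat.div_eq_of_lt_le (k := 2)]
      · omega
      · linarith
      · linarith
    omega

lemma twoColorable_one {n : ℕ} {b : ZMod n} (hn : 3 ≤ n) (hodd : n % 2 = 1)
    (hb0 : b ≠ 0) (hb1 : b ≠ 1) (h7 : n ≠ 7 ∨ b.val % 2 = 0) : TwoColorable 1 b := by
  have : NeZero n := ⟨by omega⟩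
  have : Fact (1 < n) := ⟨by omega⟩
  rcases Nat.mod_two_eq_zero_or_one b.val with he | he
  · exact twoColorable_one_of_even hn hodd hb0 he
  have h7 : n ≠ 7 := by omega
  have hv1 : b.val ≠ 1 := fun h => hb1 ((ZMod.val_eq_one (by omega) b).1 h)
  have hlt := b.val_lt
  have main : ∀ B : ℕ, B % 2 = 1 → 3 ≤ B → 2 * B ≤ n + 1 →
      TwoColorable (1 : ZMod n) (B : ZMod n) := by
    intro B h1 h2 h3
    obtain ⟨r, hr, h4, h5⟩ := exists_odd_ratio hodd h1 h2 h3 h7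
    exact twoColorable_one_of_ratio hn hodd h1 hr (by omega) h4 h5
  rcases Nat.lt_or_ge (n + 1) (2 * b.val) with h | h
  · have := main (n + 1 - b.val) (by omega) (by omega) (by omega)
    rw [Nat.cast_sub (by omega)] at this
    push_cast [ZMod.natCast_self, ZMod.natCast_zmod_val] at this
    rw [zero_add] at this
    exact this.reflect
  · simpa using main b.val he (by omega) h

/-! ### Two colors: cosets of a proper subgroup -/

/-- Every element is uniquely `i b + j a` with `i < q`, `j < m`; row `i` is a coset of `⟨a⟩`, and
the relation `q b = t a` glues the last row to row `0`. Row `i < q - 1` is colored `i + j`, with its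
defect at `j = m - 1`; the defect of the last row is at `j = 0` or `j = m - 2`, according to the
parity of `t`. -/
lemma exists_twoColorable_of_coset {n q m t : ℕ} {a b u v : ZMod n} [NeZero n]
    (huv : u * a + v * b = 1) (hqm : q * m = n) (hq : q % 2 = 1) (hq3 : 3 ≤ q)
    (hm : m % 2 = 1) (hm3 : 3 ≤ m) (hma : (m : ZMod n) * a = 0)
    (hqb : (q : ZMod n) * b = t * a) (htm : t < m) (ht : t ≠ 1) : TwoColorable a b := by
  let φ : Fin q × Fin m → ZMod n := fun p => (p.1.val : ZMod n) * b + (p.2.val : ZMod n) * a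
  have hmod : ∀ l : ℕ, ((l % m : ℕ) : ZMod n) * a = l * a := by
    intro l
    conv_rhs => rw [← Nat.mod_add_div l m]
    push_cast
    linear_combination (-((l / m : ℕ) : ZMod n)) * hma
  have hsurj : Function.Surjective φ := by
    intro x
    set k := (x * v).val with hk
    set l := (x * u).val with hl
    have hx : x = (k : ZMod n) * b + (l : ZMod n) * a := by
      rw [hk, hl, ZMod.natCast_zmod_val, ZMod.natCast_zmod_val]
      linear_combination (-x) * huv
    refine ⟨(⟨k % q, Nat.mod_lt _ (by omega)⟩, ⟨(l + t * (k / q)) % m, Nat.mod_lt _ (by omega)⟩), ?_⟩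
    have hkq : (k : ZMod n) = ((k % q : ℕ) : ZMod n) + (q : ZMod n) * ((k / q : ℕ) : ZMod n) := by
      exact_mod_cast congrArg (Nat.cast : ℕ → ZMod n) (Nat.mod_add_div k q).symm
    change ((k % q : ℕ) : ZMod n) * b + (((l + t * (k / q)) % m : ℕ) : ZMod n) * a = x
    rw [hmod, hx]
    push_cast
    linear_combination (-b) * hkq - ((k / q : ℕ) : ZMod n) * hqb
  have hbij : Function.Bijective φ := by
    rw [Fintype.bijective_iff_surjective_and_card]
    exact ⟨hsurj, by simp [ZMod.card, hqm]⟩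
  let e := Equiv.ofBijective φ hbij
  have hcoord : ∀ i j : ℕ, ∀ (hi : i < q) (hj : j < m),
      e.symm ((i : ZMod n) * b + (j : ZMod n) * a) = (⟨i, hi⟩, ⟨j, hj⟩) := by
    intro i j hi hj
    rw [Equiv.symm_apply_eq]
    rfl
  let c : ℕ → ℕ → ℕ := fun i j =>
    if i < q - 1 then i + j
    else if t % 2 = 0 then (if j = 0 then 1 else j)
    else (if j = m - 1 then 0 else j + 1)
  refine ⟨fun x => c (e.symm x).1.val (e.symm x).2.val, fun x hx => ?_⟩
  obtain ⟨⟨⟨i, hi⟩, ⟨j, hj⟩⟩, rfl⟩ := hbij.2 x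
  have hφ : φ (⟨i, hi⟩, ⟨j, hj⟩) = (i : ZMod n) * b + (j : ZMod n) * a := rfl
  have hj' : (j + 1) % m < m := Nat.mod_lt _ (by omega)
  have ha' : φ (⟨i, hi⟩, ⟨j, hj⟩) + a =
      (i : ZMod n) * b + (((j + 1) % m : ℕ) : ZMod n) * a := by
    rw [hφ, hmod]; push_cast; ring
  dsimp only at hx
  rw [ha', hφ, hcoord i j hi hj, hcoord i _ hi hj'] at hx
  have hjj : (j + 1 < m ∧ (j + 1) % m = j + 1) ∨ (j + 1 = m ∧ (j + 1) % m = 0) := by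
    rcases Nat.lt_or_ge (j + 1) m with h | h
    · exact Or.inl ⟨h, Nat.mod_eq_of_lt h⟩
    · obtain h : j + 1 = m := by omega
      exact Or.inr ⟨h, by rw [h, Nat.mod_self]⟩
  rcases Nat.lt_or_ge (i + 1) q with h | h
  · have hb' : (i : ZMod n) * b + (j : ZMod n) * a + b =
        ((i + 1 : ℕ) : ZMod n) * b + (j : ZMod n) * a := by
      push_cast; ring
    rw [hb', hcoord (i + 1) j h hj] at hx
    simp only [c] at hx
    split_ifs at hx <;> omega
  · obtain rfl : q = i + 1 := by omega
    have hb' : (i : ZMod n) * b + (j : ZMod n) * a + b =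
        ((0 : ℕ) : ZMod n) * b + (((j + t) % m : ℕ) : ZMod n) * a := by
      rw [hmod]
      push_cast at hqb ⊢
      linear_combination hqb
    have hjt : (j + t < m ∧ (j + t) % m = j + t) ∨ (m ≤ j + t ∧ (j + t) % m = j + t - m) := by
      rcases Nat.lt_or_ge (j + t) m with h | h
      · exact Or.inl ⟨h, Nat.mod_eq_of_lt h⟩
      · exact Or.inr ⟨h, by rw [Nat.mod_eq_sub_mod h, Nat.mod_eq_of_lt (by omega)]⟩
    rw [hb', hcoord 0 ((j + t) % m) (by omega) (Nat.mod_lt _ (by omega))] at hx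
    simp only [c] at hx
    split_ifs at hx <;> omega

/-- With `q = gcd(a, n)`, the relation `q b = a` is the only obstruction, and it would
make `b` a generator, hence a unit. -/
lemma twoColorable_of_not_unit {n : ℕ} {a b : ZMod n} (hn : 3 ≤ n) (hodd : n % 2 = 1)
    (ha : a ≠ 0) (hgcd : Nat.gcd a.val (Nat.gcd b.val n) = 1)
    (hau : ¬ IsUnit a) (hbu : ¬ IsUnit b) : TwoColorable a b := by
  have : NeZero n := ⟨by omega⟩
  obtain ⟨u, v, huv⟩ := exists_bezout hgcd
  obtain ⟨m, hm⟩ := Nat.gcd_dvd_right a.val n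
  obtain ⟨A, hA⟩ := Nat.gcd_dvd_left a.val n
  have hbez := congrArg (Int.cast : ℤ → ZMod n) (Nat.gcd_eq_gcd_ab a.val n)
  push_cast [ZMod.natCast_zmod_val, ZMod.natCast_self] at hbez
  rw [zero_mul, add_zero] at hbez
  have hq1 : Nat.gcd a.val n ≠ 1 := by
    intro h
    rw [h, Nat.cast_one] at hbez
    exact hau (IsUnit.of_mul_eq_one _ hbez.symm)
  have hapos : a.val ≠ 0 := fun h => ha ((ZMod.val_eq_zero a).1 h)
  have halt := a.val_lt
  generalize Nat.gcd a.val n = q at *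
  have hqmodd : (q * m) % 2 = 1 := by rw [← hm]; exact hodd
  have hq : q % 2 = 1 := Nat.odd_iff.1 (Nat.odd_mul.1 (Nat.odd_iff.2 hqmodd)).1
  have hmo : m % 2 = 1 := Nat.odd_iff.1 (Nat.odd_mul.1 (Nat.odd_iff.2 hqmodd)).2
  have hm1 : m ≠ 1 := by
    rintro rfl
    have : A ≠ 0 := by rintro rfl; omega
    have : 1 ≤ A := by omega
    nlinarith
  have hma : (m : ZMod n) * a = 0 := by
    have e1 : a = (q : ZMod n) * A := by
      rw [← ZMod.natCast_zmod_val a, hA]; push_cast; rfl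
    have e2 : (q : ZMod n) * m = 0 := by
      rw [← Nat.cast_mul, ← hm, ZMod.natCast_self]
    rw [e1]
    linear_combination (A : ZMod n) * e2
  obtain ⟨T, hT⟩ : ∃ T : ℕ, (q : ZMod n) * b = T * a := by
    refine ⟨((Nat.gcdA a.val n : ZMod n) * b).val, ?_⟩
    rw [ZMod.natCast_zmod_val, hbez]
    ring
  have hTm : (q : ZMod n) * b = ((T % m : ℕ) : ZMod n) * a := by
    rw [hT]
    conv_lhs => rw [← Nat.mod_add_div T m]
    push_cast
    linear_combination ((T / m : ℕ) : ZMod n) * hma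
  refine exists_twoColorable_of_coset huv hm.symm hq (by omega) hmo (by omega) hma hTm
    (Nat.mod_lt _ (by omega)) ?_
  intro h1
  rw [h1, Nat.cast_one, one_mul] at hTm
  exact hbu (IsUnit.of_mul_eq_one (u * q + v) (by rw [← huv, ← hTm]; ring))

/-! ### The Fano plane and the conclusion -/

lemma hasPoly_of_equivSets {n k : ℕ} {S S' : Set (ZMod n)} (h : EquivSets n S S')
    (hS : HasPoly n S k) : HasPoly n S' k := by
  obtain ⟨c, d, hd, rfl⟩ := h
  obtain ⟨χ, hχ⟩ := hS
  obtain ⟨e, he⟩ : ∃ e : ZMod n, e * d = 1 := by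
    rcases Nat.eq_zero_or_pos n with rfl | hn
    · have : d * d = 1 := by
        have h1 : Int.natAbs d = 1 := by simpa [ZMod.val] using hd
        have h2 := Int.natAbs_eq d
        rw [h1] at h2
        rcases h2 with h2 | h2 <;> rw [h2] <;> rfl
      exact ⟨d, this⟩
    · have : NeZero n := ⟨by omega⟩
      have := ZMod.coe_mul_inv_eq_one d.val hd
      rw [ZMod.natCast_zmod_val, mul_comm] at this
      exact ⟨_, this⟩
  refine ⟨fun x => χ (e * x), fun x i => ?_⟩
  obtain ⟨s, hs, hi⟩ := hχ (e * (x + c)) i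
  refine ⟨d * s + c, ⟨s, hs, rfl⟩, ?_⟩
  rw [← hi]
  exact congrArg χ (by linear_combination s * he)

lemma not_twoColorable_fano : ¬ TwoColorable (1 : ZMod 7) 3 := by
  rintro ⟨f, hf⟩
  have h0 := hf 0
  have h1 := hf 1
  have h2 := hf 2
  have h3 := hf 3
  have h4 := hf 4
  have h5 := hf 5
  have h6 := hf 6
  change ¬(f 0 % 2 = f 1 % 2 ∧ f 0 % 2 = f 3 % 2) at h0
  change ¬(f 1 % 2 = f 2 % 2 ∧ f 1 % 2 = f 4 % 2) at h1
  change ¬(f 2 % 2 = f 3 % 2 ∧ f 2 % 2 = f 5 % 2) at h2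
  change ¬(f 3 % 2 = f 4 % 2 ∧ f 3 % 2 = f 6 % 2) at h3
  change ¬(f 4 % 2 = f 5 % 2 ∧ f 4 % 2 = f 0 % 2) at h4
  change ¬(f 5 % 2 = f 6 % 2 ∧ f 5 % 2 = f 1 % 2) at h5
  change ¬(f 6 % 2 = f 0 % 2 ∧ f 6 % 2 = f 2 % 2) at h6
  omega

/-- In `ZMod 7`, an odd representative of the ratio `c ≠ 1` is `3` or `5`, and both ratios give sets
equivalent to the Fano difference set `{0, 1, 3}`. -/
lemma equivSets_fano {a c : ZMod 7} (ha : a ≠ 0) (hc1 : c ≠ 1) (hc : c.val % 2 = 1) :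
    EquivSets 7 {0, a, a * c} ({0, 1, 3} : Set (ZMod 7)) := by
  have hc' : c = 3 ∨ c = 5 := by revert c; decide
  obtain ⟨d, hd, h1, h2⟩ : ∃ d : ZMod 7, d * a = 1 ∧ Nat.gcd d.val 7 = 1 ∧
      Nat.gcd (-d).val 7 = 1 := by revert a; decide
  rcases hc' with rfl | rfl
  · refine ⟨0, d, h1, ?_⟩
    have h3 : d * (a * 3) = 3 := by linear_combination 3 * hd
    simp [Set.image_insert_eq, hd, h3]
    -- The other ratio uses `{0, 1, 3} = 1 - {0, 1, 5}`.
  · refine ⟨1, -d, h2, ?_⟩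
    have h3 : -d * a + 1 = 0 := by linear_combination -hd
    have h4 : -d * (a * 5) + 1 = 3 := by
      have : (7 : ZMod 7) = 0 := rfl
      linear_combination (-5) * hd - this
    simp only [Set.image_insert_eq, Set.image_singleton, h3, h4, mul_zero, zero_add]
    exact Set.insert_comm _ _ _

/-- A unit `a` is scaled to `1`. -/
lemma twoColorable_of_unit {n : ℕ} {a b : ZMod n} (hn : 3 ≤ n) (hodd : n % 2 = 1)
    (hab : a ≠ b) (ha : a ≠ 0) (hb : b ≠ 0) (hu : IsUnit a)
    (h : ¬(n = 7 ∧ EquivSets n {0, a, b} ({0, 1, 3} : Set (ZMod n)))) : TwoColorable a b := by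
  obtain ⟨e, he⟩ := hu.exists_left_inv
  obtain ⟨c, rfl⟩ : ∃ c, b = a * c := ⟨e * b, by linear_combination (-b) * he⟩
  have hc0 : c ≠ 0 := by rintro rfl; simp at hb
  have hc1 : c ≠ 1 := by rintro rfl; simp at hab
  have : TwoColorable 1 c := by
    refine twoColorable_one hn hodd hc0 hc1 ?_
    by_contra hcon
    push Not at hcon
    obtain ⟨rfl, hc⟩ := hcon
    exact h ⟨rfl, equivSets_fano ha hc1 (by omega)⟩
  simpa using this.scale he

lemma twoColorable_main {n : ℕ} {a b : ZMod n} (hn : 3 ≤ n)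
    (hab : a ≠ b) (ha : a ≠ 0) (hb : b ≠ 0)
    (hgcd : Nat.gcd a.val (Nat.gcd b.val n) = 1)
    (h : ¬(n = 7 ∧ EquivSets n {0, a, b} ({0, 1, 3} : Set (ZMod n)))) : TwoColorable a b := by
  have : NeZero n := ⟨by omega⟩
  rcases Nat.mod_two_eq_zero_or_one n with hev | hodd
  · have h2 : 2 ∣ n := by omega
    by_cases hA : a.val % 2 = 1
    · exact twoColorable_of_even h2 hA
    by_cases hB : b.val % 2 = 1
    · exact (twoColorable_of_even h2 hB).swap
    have : 2 ∣ Nat.gcd a.val (Nat.gcd b.val n) :=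
      Nat.dvd_gcd (by omega) (Nat.dvd_gcd (by omega) h2)
    omega
  by_cases hau : IsUnit a
  · exact twoColorable_of_unit hn hodd hab ha hb hau h
  by_cases hbu : IsUnit b
  · refine (twoColorable_of_unit hn hodd hab.symm hb ha hbu ?_).swap
    rwa [Set.pair_comm b a]
  · exact twoColorable_of_not_unit hn hodd ha hgcd hau hbu

/-- For `S = {0,a,b} ⊆ ZMod n` with `a, b, 0` distinct and
`gcd(a,b,n) = 1`: `p_n(S) = 3` if `3 ∣ n` and `a, b` are in different nonzero
mod 3 classes; `p_n(S) = 1` if `n = 7` and `S` is equivalent to `{0,1,3}`;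
and `p_n(S) = 2` otherwise. -/
theorem polyNum_of_three_subset (n : ℕ) (hn : 3 ≤ n) (a b : ZMod n)
    (hab : a ≠ b) (ha : a ≠ 0) (hb : b ≠ 0)
    (hgcd : Nat.gcd a.val (Nat.gcd b.val n) = 1) :
    ((3 ∣ n ∧ DiffNonzeroMod3 a b) → polyNum n {0, a, b} = 3) ∧
    ((n = 7 ∧ EquivSets n {0, a, b} ({0, 1, 3} : Set (ZMod n))) →
        polyNum n {0, a, b} = 1) ∧
    ((¬(3 ∣ n ∧ DiffNonzeroMod3 a b) ∧
        ¬(n = 7 ∧ EquivSets n {0, a, b} ({0, 1, 3} : Set (ZMod n)))) →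
        polyNum n {0, a, b} = 2) := by
  have : NeZero n := ⟨by omega⟩
  refine ⟨?_, ?_, ?_⟩
  · rintro ⟨h3, hd⟩
    exact polyNum_eq (hasPoly_three h3 hd) (not_hasPoly_four a b)
  · rintro ⟨rfl, he⟩
    refine polyNum_eq (hasPoly_one a b) fun h2 => ?_
    exact not_twoColorable_fano (hasPoly_two_iff.1 (hasPoly_of_equivSets he h2))
  · rintro ⟨h3, h7⟩
    exact polyNum_eq (hasPoly_two_iff.2 (twoColorable_main hn hab ha hb hgcd h7))
      fun h => h3 (of_hasPoly_three hgcd h)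
end

section
/- Let n ≥ 3 and let a, b ∈ ℤ_n with a ≠ b, a ≠ 0, b ≠ 0. Then p_n({0, a, b}) = 3 if there is a nonnegative integer j with n ≡ 0 mod 3^{j+1}, a = 3^j·m_a, b = 3^j·m_b, where m_a, m_b are not ≡ 0 mod 3 and m_a + m_b ≡ 0 mod 3; p_n({0, a, b}) = 1 if n ≡ 0 mod 7, the cyclic subgroup of ℤ_n generated by a has order 7, and b = 3a or b = 5a; and p_n({0, a, b}) = 2 otherwise. -/
/-- The condition for `p_n({0,a,b}) = 3`: there are `j`, `m_a`, `m_b` with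
`3^(j+1) ∣ n`, `a = 3^j·m_a`, `b = 3^j·m_b`, `m_a, m_b ≢ 0 (mod 3)` and
`m_a + m_b ≡ 0 (mod 3)`. -/
def CondThree (n : ℕ) (a b : ZMod n) : Prop :=
  ∃ j : ℕ, ∃ ma mb : ℤ, (3 ^ (j + 1) : ℕ) ∣ n ∧
    a = ((3 ^ j * ma : ℤ) : ZMod n) ∧ b = ((3 ^ j * mb : ℤ) : ZMod n) ∧
    ¬ ((3 : ℤ) ∣ ma) ∧ ¬ ((3 : ℤ) ∣ mb) ∧ (3 : ℤ) ∣ (ma + mb)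

/-- The condition for `p_n({0,a,b}) = 1`: `7 ∣ n`, the cyclic subgroup
generated by `a` has order `7`, and `b = 3a` or `b = 5a`. -/
def CondOne (n : ℕ) (a b : ZMod n) : Prop :=
  7 ∣ n ∧ addOrderOf a = 7 ∧ (b = 3 * a ∨ b = 5 * a)

namespace PolyThree

/-! ### Polychromatic colorings of `{0, a, b}` -/

/-- `{0, a, b}` admits a polychromatic coloring with `k` colors. -/
def HasColoring (n k : ℕ) (a b : ZMod n) : Prop :=
  ∃ χ : ZMod n → Fin k, IsPolyColoring ({0, a, b} : Set (ZMod n)) χ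

lemma isPolyColoring_iff {n k : ℕ} {a b : ZMod n} {χ : ZMod n → Fin k} :
    IsPolyColoring ({0, a, b} : Set (ZMod n)) χ ↔
      ∀ x c, χ x = c ∨ χ (x + a) = c ∨ χ (x + b) = c := by
  simp [IsPolyColoring]

lemma HasColoring.swap {n k : ℕ} {a b : ZMod n} (h : HasColoring n k a b) :
    HasColoring n k b a := by
  obtain ⟨χ, hχ⟩ := h
  refine ⟨χ, isPolyColoring_iff.2 fun x c => ?_⟩
  have := isPolyColoring_iff.1 hχ x c
  tauto

lemma HasColoring.le_three {n k : ℕ} {a b : ZMod n} (h : HasColoring n k a b) : k ≤ 3 := by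
  obtain ⟨χ, hχ⟩ := h
  rw [isPolyColoring_iff] at hχ
  have hsub : (Finset.univ : Finset (Fin k)) ⊆ {χ 0, χ (0 + a), χ (0 + b)} := by
    intro c _
    rcases hχ 0 c with h | h | h <;> simp [← h]
  simpa using (Finset.card_le_card hsub).trans Finset.card_le_three

lemma polyNum_eq {n k : ℕ} {a b : ZMod n} (h : HasColoring n k a b)
    (hmax : ∀ l, HasColoring n l a b → l ≤ k) : polyNum n {0, a, b} = k :=
  IsGreatest.csSup_eq (s := {l | HasColoring n l a b}) ⟨h, fun l hl => hmax l hl⟩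

lemma hasColoring_one {n : ℕ} (a b : ZMod n) : HasColoring n 1 a b :=
  ⟨fun _ => 0, isPolyColoring_iff.2 fun _ _ => Or.inl (Subsingleton.elim _ _)⟩

/-! ### Three colors -/

/-- The base-`3` digit `⌊x / 3^j⌋ mod 3` is a polychromatic coloring. -/
lemma hasColoring_three {n : ℕ} [NeZero n] {a b : ZMod n} (h : CondThree n a b) :
    HasColoring n 3 a b := by
  obtain ⟨j, ma, mb, hn, ha, hb, hma, hmb, hmab⟩ := h
  have hpos : (0 : ℤ) < 3 ^ j := by positivity
  have key : ∀ (x : ZMod n) (m : ℤ),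
      (((x + ((3 ^ j * m : ℤ) : ZMod n)).val : ℤ) / 3 ^ j) % 3
        = ((x.val : ℤ) / 3 ^ j + m) % 3 := by
    intro x m
    have h1 : (((x + ((3 ^ j * m : ℤ) : ZMod n)).val : ℤ) : ZMod n)
        = (((x.val : ℤ) + 3 ^ j * m : ℤ) : ZMod n) := by
      push_cast
      simp
    rw [ZMod.intCast_eq_intCast_iff_dvd_sub] at h1
    obtain ⟨t, ht⟩ := (Int.natCast_dvd_natCast.2 hn).trans h1
    have h2 : ((x + ((3 ^ j * m : ℤ) : ZMod n)).val : ℤ)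
        = (x.val : ℤ) + 3 ^ j * (m - 3 * t) := by
      rw [Nat.cast_pow, Nat.cast_ofNat, pow_succ] at ht
      linear_combination -ht
    rw [h2, Int.add_mul_ediv_left _ _ hpos.ne']
    omega
  let χ : ZMod n → Fin 3 := fun x =>
    ⟨((((x.val : ℤ) / 3 ^ j) % 3).toNat), by omega⟩
  refine ⟨χ, isPolyColoring_iff.2 fun x c => ?_⟩
  have hA := key x ma
  have hB := key x mb
  rw [← ha] at hA
  rw [← hb] at hB
  simp only [χ, Fin.ext_iff, hA, hB]
  have hc := c.isLt
  generalize (x.val : ℤ) / 3 ^ j = y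
  have hm : (ma % 3 = 1 ∧ mb % 3 = 2) ∨ (ma % 3 = 2 ∧ mb % 3 = 1) := by omega
  have hy : y % 3 = 0 ∨ y % 3 = 1 ∨ y % 3 = 2 := by omega
  rw [Int.add_emod y ma, Int.add_emod y mb]
  rcases hm with ⟨h1, h2⟩ | ⟨h1, h2⟩ <;> rcases hy with h | h | h <;> rw [h1, h2, h] <;>
    norm_num <;> omega

/-- A `3`-coloring that is polychromatic for `{0, a, b}` has periods `3a` and `3b`.  Writing `f` for
the indicator of a color class and `A`, `B` for the shifts by `a`, `b`, one has `(1 + A + B) f = 1`,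
so `(1 + A + B)³ f = 9`; reduced modulo `3`, this reads `f + A³ f + B³ f = 0`, and `f` takes the values
`0` and `1` only. -/
lemma period_three {n : ℕ} {a b : ZMod n} {χ : ZMod n → Fin 3}
    (hχ : IsPolyColoring ({0, a, b} : Set (ZMod n)) χ) (x : ZMod n) :
    χ (x + 3 * a) = χ x ∧ χ (x + 3 * b) = χ x := by
  rw [isPolyColoring_iff] at hχ
  have fin : ∀ p q r : Fin 3, (∀ c, p = c ∨ q = c ∨ r = c) → ∀ c,
      (if p = c then 1 else 0) + (if q = c then 1 else 0) + (if r = c then 1 else 0) = (1 : ℕ) := by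
    decide
  let f : ZMod n → ℕ := fun y => if χ y = χ x then 1 else 0
  have hf : ∀ y, f y + f (y + a) + f (y + b) = 1 := fun y => fin _ _ _ (hχ y) _
  have hle : ∀ y, f y ≤ 1 := fun y => by simp only [f]; split_ifs <;> simp
  have h0 : f x = 1 := by simp [f]
  have e := hf x
  have ea := hf (x + a)
  have eb := hf (x + b)
  have eaa := hf (x + a + a)
  have eab := hf (x + a + b)
  have ebb := hf (x + b + b)
  rw [show x + b + a = x + a + b by ring] at eb
  rw [show x + a + b + a = x + a + a + b by ring] at eab
  rw [show x + b + b + a = x + a + b + b by ring] at ebb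
  rw [show x + a + a + a = x + 3 * a by ring] at eaa
  rw [show x + b + b + b = x + 3 * b by ring] at ebb
  have l1 := hle (x + 3 * a)
  have l2 := hle (x + 3 * b)
  have k1 : f (x + 3 * a) = 1 := by omega
  have k2 : f (x + 3 * b) = 1 := by omega
  constructor
  · by_contra h
    simp [f, h] at k1
  · by_contra h
    simp [f, h] at k2

lemma period_zmul {n : ℕ} {α : Type*} {χ : ZMod n → α} {p : ZMod n}
    (h : ∀ x, χ (x + p) = χ x) (k : ℤ) (x : ZMod n) : χ (x + k * p) = χ x := by
  have := (show Function.Periodic χ p from h).zsmul k x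
  simpa using this

/-- Let `g = gcd(a, b, n)`.  By `period_three` a polychromatic `3`-coloring has period `3g`, so that
it induces a coloring of `⟨g⟩ / ⟨3g⟩`, in which `0, a, b` have distinct colors; hence this quotient
is `ℤ/3` and `a`, `b` are its two nonzero elements. -/
lemma condThree_of_hasColoring {n : ℕ} [NeZero n] {a b : ZMod n} (h : HasColoring n 3 a b) :
    CondThree n a b := by
  obtain ⟨χ, hχ⟩ := h
  have per := period_three hχ
  rw [isPolyColoring_iff] at hχ
  have hn0 : n ≠ 0 := NeZero.ne n
  obtain ⟨d, hd⟩ : ∃ d, d = Nat.gcd a.val b.val := ⟨_, rfl⟩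
  obtain ⟨g, hg⟩ : ∃ g, g = Nat.gcd d n := ⟨_, rfl⟩
  have hg0 : g ≠ 0 := by rw [hg]; exact Nat.gcd_ne_zero_right hn0
  -- Bézout: `g` is a combination of `a` and `b` in `ZMod n`
  have bez : ∃ u v : ℤ, (g : ZMod n) = u * a + v * b := by
    have h1 := congrArg (Int.cast : ℤ → ZMod n) (Nat.gcd_eq_gcd_ab d n)
    have h2 := congrArg (Int.cast : ℤ → ZMod n) (Nat.gcd_eq_gcd_ab a.val b.val)
    rw [← hg] at h1
    rw [← hd] at h2
    push_cast at h1 h2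
    simp only [ZMod.natCast_val, ZMod.cast_id', id_eq, ZMod.natCast_self, zero_mul,
      add_zero] at h1 h2
    refine ⟨a.val.gcdA b.val * d.gcdA n, a.val.gcdB b.val * d.gcdA n, ?_⟩
    rw [h1, h2]
    push_cast
    ring
  obtain ⟨u, v, huv⟩ := bez
  have perg : ∀ x, χ (x + 3 * (g : ZMod n)) = χ x := by
    intro x
    rw [show x + 3 * (g : ZMod n) = (x + u * (3 * a)) + v * (3 * b) by rw [huv]; ring]
    rw [period_zmul (fun x => (per x).2), period_zmul (fun x => (per x).1)]
  obtain ⟨n', hn'⟩ : g ∣ n := hg ▸ Nat.gcd_dvd_right _ _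
  have hgd : g ∣ d := hg ▸ Nat.gcd_dvd_left _ _
  obtain ⟨a', ha'⟩ : g ∣ a.val := hgd.trans (hd ▸ Nat.gcd_dvd_left _ _)
  obtain ⟨b', hb'⟩ : g ∣ b.val := hgd.trans (hd ▸ Nat.gcd_dvd_right _ _)
  have ha : a = a' * (g : ZMod n) := by
    rw [← ZMod.natCast_zmod_val a, ha']; push_cast; ring
  have hb : b = b' * (g : ZMod n) := by
    rw [← ZMod.natCast_zmod_val b, hb']; push_cast; ring
  have distinct : ∀ p q r : Fin 3, (∀ c, p = c ∨ q = c ∨ r = c) → q ≠ p ∧ r ≠ p ∧ q ≠ r := by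
    decide
  obtain ⟨c1, c2, c3⟩ := distinct _ _ _ (hχ 0)
  rw [zero_add] at c1 c2 c3
  rw [zero_add] at c3
  -- multiples of `g` whose coefficients agree modulo `3` have the same color
  have same : ∀ p q : ℕ, p % 3 = q % 3 → χ (p * (g : ZMod n)) = χ (q * (g : ZMod n)) := by
    intro p q hpq
    obtain ⟨k, hk⟩ : ∃ k : ℤ, (p : ℤ) = q + 3 * k := ⟨((p : ℤ) - q) / 3, by omega⟩
    have hk' := congrArg (Int.cast : ℤ → ZMod n) hk
    push_cast at hk'
    rw [hk', show ((q : ZMod n) + 3 * k) * g = q * g + k * (3 * g) by ring]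
    exact period_zmul perg _ _
  have h3n : 3 ∣ n' := by
    by_contra h3
    -- `n'` is invertible modulo `3` and `n' * g = 0`, so `a' * g` and `0` have the same color
    have hz : ((n' : ℕ) : ZMod n) * (g : ZMod n) = 0 := by
      rw [← Nat.cast_mul, mul_comm, ← hn', ZMod.natCast_self]
    apply c1
    have := same a' (a' * n' * n') (by
      rw [mul_assoc, Nat.mul_mod]
      have : n' * n' % 3 = 1 := by
        rcases (by omega : n' % 3 = 1 ∨ n' % 3 = 2) with h | h <;> simp [Nat.mul_mod, h]
      simp [this])
    rw [ha, this]
    push_cast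
    rw [mul_assoc, hz, mul_zero]
  have e1 : a' % 3 ≠ 0 := fun h => c1 (by
    rw [ha, same a' 0 (by simpa using h)]; simp)
  have e2 : b' % 3 ≠ 0 := fun h => c2 (by
    rw [hb, same b' 0 (by simpa using h)]; simp)
  have e3 : a' % 3 ≠ b' % 3 := fun h => c3 (by rw [ha, hb, same a' b' h])
  obtain ⟨j, m, hm, hgm⟩ := Nat.exists_eq_pow_mul_and_not_dvd hg0 3 (by norm_num)
  have hm3 : ¬ (3 : ℤ) ∣ m := by omega
  have p3 : Prime (3 : ℤ) := Int.prime_three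
  refine ⟨j, m * a', m * b', ?_, ?_, ?_, ?_, ?_, ?_⟩
  · rw [hn', hgm, pow_succ, mul_assoc]
    exact mul_dvd_mul_left _ (h3n.mul_left m)
  · rw [ha, hgm]; push_cast; ring
  · rw [hb, hgm]; push_cast; ring
  · rw [p3.dvd_mul]; omega
  · rw [p3.dvd_mul]; omega
  · rw [← mul_add]; exact Dvd.dvd.mul_left (by omega) _

/-! ### The Fano obstruction -/

set_option maxRecDepth 10000 in
set_option maxRecDepth 10000 in
set_option maxRecDepth 10000 in
lemma fano : ∀ f : ZMod 7 → Fin 2,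
    (∃ i, f i = f (i + 1) ∧ f i = f (i + 3)) ∧ (∃ i, f i = f (i + 1) ∧ f i = f (i + 5)) := by
  change ∀ f : Fin 7 → Fin 2,
    (∃ i : Fin 7, f i = f (i + 1) ∧ f i = f (i + 3)) ∧
      (∃ i : Fin 7, f i = f (i + 1) ∧ f i = f (i + 5))
  decide

/-- Pulling a coloring back along `ℤ/7 ≅ ⟨a⟩` reduces to the fact that the Fano plane, whose lines
are the translates of `{0, 1, 3}` (or of `{0, 1, 5}`), is not `2`-colorable. -/
lemma not_hasColoring_two {n : ℕ} {a b : ZMod n} (h : CondOne n a b) :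
    ¬ HasColoring n 2 a b := by
  rintro ⟨χ, hχ⟩
  rw [isPolyColoring_iff] at hχ
  obtain ⟨-, ha, hb⟩ := h
  have h7 : (7 : ℤ) • a = 0 := by
    have := addOrderOf_nsmul_eq_zero a
    rw [ha] at this
    exact_mod_cast this
  let φ : ZMod 7 →+ ZMod n := ZMod.lift 7 ⟨zmultiplesHom _ a, by simpa using h7⟩
  have hφ1 : φ 1 = a := by
    have := ZMod.lift_coe 7 (⟨zmultiplesHom _ a, by simpa using h7⟩ :
      {f : ℤ →+ ZMod n // f (7 : ℕ) = 0}) 1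
    simpa [φ] using this
  have hφ3 : φ 3 = 3 * a := by
    rw [show (3 : ZMod 7) = 1 + 1 + 1 by decide, map_add, map_add, hφ1]; ring
  have hφ5 : φ 5 = 5 * a := by
    rw [show (5 : ZMod 7) = 1 + 1 + 3 by decide, map_add, map_add, hφ1, hφ3]; ring
  have bad : ∀ p q r : Fin 2, (∀ c, p = c ∨ q = c ∨ r = c) → ¬ (p = q ∧ p = r) := by decide
  obtain ⟨⟨i, hi, hi'⟩, ⟨k, hk, hk'⟩⟩ := fano (fun i => χ (φ i))
  rcases hb with rfl | rfl
  · refine bad _ _ _ (hχ (φ i)) ⟨?_, ?_⟩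
    · rw [← hφ1, ← map_add]; exact hi
    · rw [← hφ3, ← map_add]; exact hi'
  · refine bad _ _ _ (hχ (φ k)) ⟨?_, ?_⟩
    · rw [← hφ1, ← map_add]; exact hk
    · rw [← hφ5, ← map_add]; exact hk'

/-! ### Two colors: semicircle colorings -/

/-- Color `x` by the half of the circle `ℤ/n` in which `t * x` lies.  The numerical hypotheses say
that the points `0`, `r = t * a`, `s = t * b` leave no arc longer than `n / 2` free, so no rotation
of them fits into a half-open semicircle. -/
lemma hasColoring_two_of_arcs {n : ℕ} [NeZero n] {a b : ZMod n} (t : ZMod n) {r s : ℕ}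
    (hr : t * a = r) (hs : t * b = s) (hsn : s < n) (h1 : 2 * r ≤ n) (h2 : n ≤ 2 * s)
    (h3 : 2 * s ≤ n + 2 * r) : HasColoring n 2 a b := by
  have hrn : r < n := by have := NeZero.pos n; omega
  refine ⟨fun x => if 2 * (t * x).val < n then 0 else 1, isPolyColoring_iff.2 fun x c => ?_⟩
  have hy := (t * x).val_lt
  have va : (t * (x + a)).val = ((t * x).val + r) % n := by
    rw [mul_add, ZMod.val_add, hr, ZMod.val_natCast_of_lt hrn]
  have vb : (t * (x + b)).val = ((t * x).val + s) % n := by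
    rw [mul_add, ZMod.val_add, hs, ZMod.val_natCast_of_lt hsn]
  simp only [va, vb]
  generalize (t * x).val = y at *
  have ma : (y + r) % n = y + r ∨ n ≤ y + r ∧ (y + r) % n = y + r - n := by
    rcases lt_or_ge (y + r) n with h | h
    · exact Or.inl (Nat.mod_eq_of_lt h)
    · exact Or.inr ⟨h, by rw [Nat.mod_eq_sub_mod h, Nat.mod_eq_of_lt (by omega)]⟩
  have mb : (y + s) % n = y + s ∨ n ≤ y + s ∧ (y + s) % n = y + s - n := by
    rcases lt_or_ge (y + s) n with h | h
    · exact Or.inl (Nat.mod_eq_of_lt h)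
    · exact Or.inr ⟨h, by rw [Nat.mod_eq_sub_mod h, Nat.mod_eq_of_lt (by omega)]⟩
  have la := Nat.mod_lt (y + r) (NeZero.pos n)
  have lb := Nat.mod_lt (y + s) (NeZero.pos n)
  generalize (y + r) % n = ya at *
  generalize (y + s) % n = yb at *
  have hc : c = 0 ∨ c = 1 := by revert c; decide
  rcases hc with rfl | rfl
  · simp only [ite_eq_left_iff, one_ne_zero, imp_false, not_not]
    omega
  · simp only [ite_eq_right_iff, zero_ne_one, imp_false]
    omega

/-- The multiples of an element `x` of order `L` in `ℤ/n` are the multiples of `n / L`. -/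
lemma exists_mul_eq {n : ℕ} [NeZero n] (x : ZMod n) :
    ∃ w : ℕ, addOrderOf x * w = n ∧ ∃ t : ZMod n, t * x = w := by
  refine ⟨n.gcd x.val, ?_, ?_⟩
  · conv_lhs => rw [← ZMod.natCast_zmod_val x]
    rw [ZMod.addOrderOf_coe _ (NeZero.ne n), ZMod.val_natCast, Nat.mod_eq_of_lt x.val_lt]
    exact Nat.div_mul_cancel (Nat.gcd_dvd_left _ _)
  · have h1 := congrArg (Int.cast : ℤ → ZMod n) (Nat.gcd_eq_gcd_ab n x.val)
    push_cast at h1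
    simp only [ZMod.natCast_val, ZMod.cast_id', id_eq, ZMod.natCast_self, zero_mul,
      zero_add] at h1
    exact ⟨_, by rw [mul_comm]; exact h1.symm⟩

/-- If `a` has even order, some character maps `a` to the antipode of `0`. -/
lemma hasColoring_two_of_even {n : ℕ} [NeZero n] {a b : ZMod n} (h : Even (addOrderOf a)) :
    HasColoring n 2 a b := by
  obtain ⟨w, hw, t, ht⟩ := exists_mul_eq a
  obtain ⟨l, hl⟩ := h
  have hn : n = 2 * (l * w) := by rw [← hw, hl]; ring
  have hpos := NeZero.pos n
  have hta : ((l : ZMod n) * t) * a = (l * w : ℕ) := by rw [mul_assoc, ht]; push_cast; ring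
  have htb : ((l : ZMod n) * t) * b = (((l : ZMod n) * t) * b).val := by simp
  have hlt := (((l : ZMod n) * t) * b).val_lt
  rcases le_total n (2 * (((l : ZMod n) * t) * b).val) with h | h
  · exact hasColoring_two_of_arcs _ hta htb hlt (by omega) h (by omega)
  · exact (hasColoring_two_of_arcs _ htb hta (by omega) h (by omega) (by omega)).swap

/-- Suppose `b` is not a multiple of `a`, equivalently `L * b ≠ 0` for the order `L` of `a`, and
that `a` and `b` have odd order. One can move `t * b` by multiples of `n / g`, `g ≥ 3` being the
order of `L * b`, without changing `t * a`. So `t * a` can be placed at `n / 2 - n / (2 * L)`,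
which is at least `n / 3`, and `t * b` between `n / 2` and `n / 2 + n / 3`. -/
lemma hasColoring_two_of_not_multiple {n : ℕ} [NeZero n] {a b : ZMod n} (ha : a ≠ 0)
    (hoa : Odd (addOrderOf a)) (hob : Odd (addOrderOf b))
    (hb : ((addOrderOf a : ℕ) : ZMod n) * b ≠ 0) : HasColoring n 2 a b := by
  obtain ⟨w, hw, t₀, ht₀⟩ := exists_mul_eq a
  obtain ⟨v, hv, t₁, ht₁⟩ := exists_mul_eq (((addOrderOf a : ℕ) : ZMod n) * b)
  have hLa : ((addOrderOf a : ℕ) : ZMod n) * a = 0 := by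
    rw [← nsmul_eq_mul]; exact addOrderOf_nsmul_eq_zero a
  have hgo : Odd (addOrderOf (((addOrderOf a : ℕ) : ZMod n) * b)) := by
    refine Odd.of_dvd_nat hob (addOrderOf_dvd_of_nsmul_eq_zero ?_)
    have := addOrderOf_nsmul_eq_zero b
    rw [nsmul_eq_mul] at this ⊢
    rw [mul_left_comm, this, mul_zero]
  have hg1 := mt AddMonoid.addOrderOf_eq_one_iff.1 hb
  have hL1 := mt AddMonoid.addOrderOf_eq_one_iff.1 ha
  generalize addOrderOf (((addOrderOf a : ℕ) : ZMod n) * b) = g at *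
  generalize addOrderOf a = L at *
  obtain ⟨l, rfl⟩ := hoa
  obtain ⟨k, rfl⟩ := hgo
  have hpos := NeZero.pos n
  have hv3 : 3 * v ≤ n := by rw [← hv]; exact Nat.mul_le_mul_right v (by omega)
  have hv0 : 0 < v := Nat.pos_of_ne_zero (by rintro rfl; simp at hv; omega)
  have hw3 : 3 * w ≤ n := by rw [← hw]; exact Nat.mul_le_mul_right w (by omega)
  have hlw : 2 * (l * w) + w = n := by rw [← hw]; ring
  -- `y` is the least integer congruent to `l * t₀ * b` modulo `v` with `n ≤ 2 * y`
  obtain ⟨y, i, hy, hy1, hy2⟩ : ∃ (y : ℕ) (i : ℤ),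
      (y : ℤ) = ((l : ZMod n) * t₀ * b).val + i * v ∧ n ≤ 2 * y ∧ 2 * y < n + 2 * v := by
    generalize ((l : ZMod n) * t₀ * b).val = z
    have e1 := Int.emod_nonneg ((z : ℤ) - (n + 1) / 2) (b := v) (by omega)
    have e2 := Int.emod_lt_of_pos ((z : ℤ) - (n + 1) / 2) (b := v) (by omega)
    have e3 := Int.emod_add_mul_ediv ((z : ℤ) - (n + 1) / 2) v
    refine ⟨(((z : ℤ) - (n + 1) / 2) % v + (n + 1) / 2).toNat,
      -(((z : ℤ) - (n + 1) / 2) / v), ?_, by omega, by omega⟩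
    rw [Int.toNat_of_nonneg (by omega)]
    linear_combination e3
  refine hasColoring_two_of_arcs
    ((l : ZMod n) * t₀ + (i : ZMod n) * t₁ * ((2 * l + 1 : ℕ) : ZMod n)) (r := l * w) (s := y)
    ?_ ?_ (by omega) (by omega) hy1 (by omega)
  · rw [add_mul, mul_assoc, ht₀, mul_assoc _ _ a, hLa]
    push_cast; ring
  · have hy' := congrArg (Int.cast : ℤ → ZMod n) hy
    push_cast at hy'
    rw [ZMod.natCast_val, ZMod.cast_id] at hy'
    rw [hy', ← ht₁]
    ring

/-- There is an odd number between `m / (2 * h)` and `2 * m / (2 * h + 1)`.  The only exception,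
`h = 1` and `m = 7`, is the Fano plane. -/
lemma exists_odd_between {m h : ℕ} (h1 : 1 ≤ h) (hm : 4 * h + 1 ≤ m) (hodd : Odd m)
    (hex : ¬ (h = 1 ∧ m = 7)) :
    ∃ q, Odd q ∧ m ≤ 2 * h * q ∧ (2 * h + 1) * q ≤ 2 * m := by
  -- the least odd number above the lower bound works
  have hP : ∃ k, m ≤ 2 * h * (2 * k + 1) := ⟨m, by nlinarith⟩
  classical
  obtain ⟨k, hk, hmin⟩ : ∃ k, m ≤ 2 * h * (2 * k + 1) ∧
      ∀ k' < k, ¬ m ≤ 2 * h * (2 * k' + 1) :=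
    ⟨Nat.find hP, Nat.find_spec hP, fun _ => Nat.find_min hP⟩
  refine ⟨2 * k + 1, ⟨k, rfl⟩, hk, ?_⟩
  rcases k with _ | k
  · omega
  have hlast := hmin k (by omega)
  obtain ⟨h', rfl⟩ : ∃ h', h = h' + 1 := ⟨h - 1, by omega⟩
  obtain ⟨p, rfl⟩ := hodd
  rcases k with _ | _ | k
  · omega
  · omega
  · push Not at hlast
    nlinarith [Nat.zero_le (h' * k)]

/-- With `L` points on the circle, multiplication by `s` moves `{0, 1, c}` to `{0, s, r}` in a
position in which no free arc is longer than a semicircle. -/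
lemma exists_multiplier {L c : ℕ} (hL : Odd L) (hc : 2 ≤ c) (hcL : c < L)
    (hex : ¬ (L = 7 ∧ (c = 3 ∨ c = 5))) :
    ∃ (r s : ℕ) (k : ℤ), (s : ℤ) * c = r + L * k ∧ s < L ∧ 2 * r ≤ L ∧ L ≤ 2 * s ∧
      2 * s ≤ L + 2 * r := by
  obtain ⟨p, rfl⟩ := hL
  rcases Nat.even_or_odd' c with ⟨h, rfl | rfl⟩
  · exact ⟨h, p + 1, h, by push_cast; ring, by omega, by omega, by omega, by omega⟩
  rcases le_total (4 * h + 1) (2 * p + 1) with hh | hh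
  · obtain ⟨q, ⟨l, rfl⟩, h1, h2⟩ := exists_odd_between (m := 2 * p + 1) (h := h) (by omega) hh
      ⟨p, rfl⟩ (by omega)
    obtain ⟨x, hx⟩ : ∃ x, x = h * (2 * l + 1) := ⟨_, rfl⟩
    have e1 : 2 * h * (2 * l + 1) = 2 * x := by rw [hx]; ring
    have e2 : (2 * h + 1) * (2 * l + 1) = 2 * x + (2 * l + 1) := by rw [hx]; ring
    rw [e1] at h1
    rw [e2] at h2
    have hlp : l < p := by omega
    refine ⟨x + l - p, p + l + 1, h + 1, ?_, by omega, by omega, by omega, by omega⟩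
    rw [Nat.cast_sub (by omega), hx]
    push_cast
    ring
  · -- reflecting the circle replaces `c` by `L + 1 - c = 2 * (p - h) + 1`
    obtain ⟨h', hh'⟩ : ∃ h', p = h + h' := ⟨p - h, by omega⟩
    obtain ⟨q, ⟨l, rfl⟩, h1, h2⟩ := exists_odd_between (m := 2 * p + 1) (h := h') (by omega)
      (by omega) ⟨p, rfl⟩ (by omega)
    obtain ⟨x, hx⟩ : ∃ x, x = h' * (2 * l + 1) := ⟨_, rfl⟩
    have e1 : 2 * h' * (2 * l + 1) = 2 * x := by rw [hx]; ring
    have e2 : (2 * h' + 1) * (2 * l + 1) = 2 * x + (2 * l + 1) := by rw [hx]; ring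
    rw [e1] at h1
    rw [e2] at h2
    have hlp : l < p := by omega
    refine ⟨2 * p + 1 - x, p + l + 1, h + l, ?_, by omega, by omega, by omega, by omega⟩
    rw [Nat.cast_sub (by omega), hx, hh']
    push_cast
    ring

/-- If `b = c * a`, scale a multiplier for `{0, 1, c}` on `ℤ/L` up to `ℤ/n`, `L` being the order of
`a`. -/
lemma hasColoring_two_of_multiple {n : ℕ} [NeZero n] {a b : ZMod n} (hab : a ≠ b)
    (hb0 : b ≠ 0) (hoa : Odd (addOrderOf a)) (h1 : ¬ CondOne n a b)
    (hb : ((addOrderOf a : ℕ) : ZMod n) * b = 0) : HasColoring n 2 a b := by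
  obtain ⟨w, hw, t, ht⟩ := exists_mul_eq a
  have hLa : ((addOrderOf a : ℕ) : ZMod n) * a = 0 := by
    rw [← nsmul_eq_mul]; exact addOrderOf_nsmul_eq_zero a
  obtain ⟨L, hL⟩ : ∃ L, L = addOrderOf a := ⟨_, rfl⟩
  rw [← hL] at hw hLa hoa hb
  have hpos := NeZero.pos n
  have hL0 : 0 < L := Nat.pos_of_ne_zero (by rintro rfl; simp at hw; omega)
  -- `b = c * a` with `c < L`
  obtain ⟨c, hcL, hc⟩ : ∃ c < L, b = (c : ZMod n) * a := by
    have hdvd : w ∣ b.val := by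
      have : ((L * b.val : ℕ) : ZMod n) = 0 := by
        push_cast; rw [ZMod.natCast_val, ZMod.cast_id, hb]
      rw [ZMod.natCast_eq_zero_iff] at this
      exact Nat.dvd_of_mul_dvd_mul_left hL0 (hw.symm ▸ this)
    obtain ⟨e, he⟩ := hdvd
    have hbe : b = ((e : ZMod n) * t) * a := by
      rw [← ZMod.natCast_zmod_val b, he, mul_assoc, ht]; push_cast; ring
    refine ⟨((e : ZMod n) * t).val % L, Nat.mod_lt _ hL0, ?_⟩
    have hmod := congrArg (Nat.cast : ℕ → ZMod n) (Nat.mod_add_div ((e : ZMod n) * t).val L)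
    rw [Nat.cast_add, Nat.cast_mul, ZMod.natCast_val ((e : ZMod n) * t), ZMod.cast_id] at hmod
    rw [hbe]
    nth_rw 1 [← hmod]
    rw [add_mul, mul_right_comm, hLa, zero_mul, add_zero]
  have hc2 : 2 ≤ c := by
    rcases c with _ | _ | c
    · simp at hc; exact absurd hc hb0
    · exact absurd (by simpa using hc.symm) hab
    · omega
  have hex : ¬ (L = 7 ∧ (c = 3 ∨ c = 5)) := by
    rintro ⟨rfl, hc'⟩
    refine h1 ⟨⟨w, hw.symm⟩, hL.symm, ?_⟩
    rcases hc' with rfl | rfl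
    · left; exact_mod_cast hc
    · right; exact_mod_cast hc
  obtain ⟨r, s, k, hk, hsL, g1, g2, g3⟩ := exists_multiplier hoa hc2 hcL hex
  have hw0 : 0 < w := Nat.pos_of_ne_zero (by rintro rfl; simp at hw; omega)
  refine (hasColoring_two_of_arcs ((s : ZMod n) * t) (r := r * w) (s := s * w) ?_ ?_ ?_ ?_ ?_ ?_).swap
  · have hk' := congrArg (Int.cast : ℤ → ZMod n) hk
    have hw' := congrArg (Nat.cast : ℕ → ZMod n) hw
    push_cast at hk' hw' ⊢
    rw [ZMod.natCast_self] at hw'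
    rw [hc, ← ht]
    rw [← ht] at hw'
    linear_combination (t * a) * hk' + (k : ZMod n) * hw'
  · rw [mul_assoc, ht]; push_cast; ring
  · rw [← hw]; exact Nat.mul_lt_mul_of_pos_right hsL hw0
  · rw [← hw]; nlinarith
  · rw [← hw]; nlinarith
  · rw [← hw]; nlinarith

lemma hasColoring_two {n : ℕ} [NeZero n] {a b : ZMod n} (hab : a ≠ b) (ha : a ≠ 0)
    (hb : b ≠ 0) (h1 : ¬ CondOne n a b) : HasColoring n 2 a b := by
  rcases Nat.even_or_odd (addOrderOf a) with hoa | hoa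
  · exact hasColoring_two_of_even hoa
  rcases Nat.even_or_odd (addOrderOf b) with hob | hob
  · exact (hasColoring_two_of_even hob).swap
  by_cases h : ((addOrderOf a : ℕ) : ZMod n) * b = 0
  · exact hasColoring_two_of_multiple hab hb hoa h1 h
  · exact hasColoring_two_of_not_multiple ha hoa hob h

/-- Merging two of three colors preserves polychromaticity. -/
lemma HasColoring.merge {n : ℕ} {a b : ZMod n} (h : HasColoring n 3 a b) :
    HasColoring n 2 a b := by
  obtain ⟨χ, hχ⟩ := h
  rw [isPolyColoring_iff] at hχ
  have key : ∀ p q r : Fin 3, (∀ c, p = c ∨ q = c ∨ r = c) → ∀ c : Fin 2,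
      (if p = 0 then 0 else 1) = c ∨ (if q = 0 then 0 else 1) = c ∨
        (if r = 0 then 0 else 1) = c := by
    decide
  exact ⟨fun x => if χ x = 0 then 0 else 1, isPolyColoring_iff.2 fun x => key _ _ _ (hχ x)⟩

end PolyThree

open PolyThree in
/-- For distinct nonzero `a, b ∈ ZMod n` (`n ≥ 3`):
`p_n({0,a,b}) = 3` under `CondThree`, `p_n({0,a,b}) = 1` under `CondOne`,
and `p_n({0,a,b}) = 2` otherwise. -/
theorem polyNum_of_three_subset_general (n : ℕ) (hn : 3 ≤ n) (a b : ZMod n)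
    (hab : a ≠ b) (ha : a ≠ 0) (hb : b ≠ 0) :
    (CondThree n a b → polyNum n {0, a, b} = 3) ∧
    (CondOne n a b → polyNum n {0, a, b} = 1) ∧
    ((¬ CondThree n a b ∧ ¬ CondOne n a b) → polyNum n {0, a, b} = 2) := by
  have : NeZero n := ⟨by omega⟩
  refine ⟨fun h => ?_, fun h => ?_, fun ⟨h3, h1⟩ => ?_⟩
  · exact polyNum_eq (hasColoring_three h) fun l hl => hl.le_three
  · refine polyNum_eq (hasColoring_one a b) fun l hl => ?_
    by_contra hlt
    have hl3 := hl.le_three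
    rcases (by omega : l = 2 ∨ l = 3) with rfl | rfl
    · exact not_hasColoring_two h hl
    · exact not_hasColoring_two h hl.merge
  · refine polyNum_eq (hasColoring_two hab ha hb h1) fun l hl => ?_
    by_contra hlt
    have hl3 := hl.le_three
    obtain rfl : l = 3 := by omega
    exact h3 (condThree_of_hasColoring hl)
end

section
/- Let n ≥ 3 and S = {0, b} ⊆ ℤ_n with gcd(b, n) = 1 (so b ≠ 0). Then p_n(S) = 1 if the order of b in ℤ_n is odd, and p_n(S) = 2 if the order of b in ℤ_n is even. -/
lemma IsPolyColoring.le_two {n k : ℕ} {b : ZMod n} {χ : ZMod n → Fin k}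
    (h : IsPolyColoring {0, b} χ) : k ≤ 2 := by
  have hsub : (Finset.univ : Finset (Fin k)) ⊆ {χ 0, χ b} := by
    intro c _
    obtain ⟨s, hs, hc⟩ := h 0 c
    rcases hs with rfl | rfl <;> simp_all
  simpa using (Finset.card_le_card hsub).trans Finset.card_le_two

lemma isPolyColoring_two_iff {n : ℕ} {b : ZMod n} {χ : ZMod n → Fin 2} :
    IsPolyColoring {0, b} χ ↔ ∀ a, χ (a + b) ≠ χ a := by
  have key : ∀ x y : Fin 2, (∀ c, x = c ∨ y = c) ↔ y ≠ x := by decide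
  simp [IsPolyColoring, key]

lemma isPolyColoring_one {n : ℕ} (b : ZMod n) :
    IsPolyColoring {0, b} (fun _ => (0 : Fin 1)) :=
  fun _ _ => ⟨0, by simp, Subsingleton.elim _ _⟩

/-- Every even multiple of `b` has the color of `0`, so no odd multiple of `b` can be `0`. -/
lemma not_odd_addOrderOf_of_alternating {n : ℕ} {b : ZMod n} {χ : ZMod n → Fin 2}
    (h : ∀ a, χ (a + b) ≠ χ a) : ¬ Odd (addOrderOf b) := by
  have key : ∀ x y z : Fin 2, y ≠ x → z ≠ y → z = x := by decide
  have hper : ∀ m : ℕ, χ ((2 * m) • b) = χ 0 := by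
    intro m
    induction m with
    | zero => simp
    | succ m ih =>
      rw [← ih, show 2 * (m + 1) = 2 * m + 1 + 1 by ring, succ_nsmul, succ_nsmul]
      exact key _ _ _ (h _) (h _)
  rintro ⟨m, hm⟩
  have h0 := addOrderOf_nsmul_eq_zero b
  rw [hm, succ_nsmul] at h0
  exact h ((2 * m) • b) (by rw [h0, hper])

/-- Reduction modulo 2 is a polychromatic 2-coloring when `n` is even and `b` is coprime to `n`. -/
lemma exists_isPolyColoring_two {n : ℕ} {b : ZMod n} (hn : 2 ∣ n)
    (hgcd : Nat.gcd b.val n = 1) :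
    ∃ χ : ZMod n → Fin 2, IsPolyColoring {0, b} χ := by
  -- `ZMod 2` is definitionally `Fin 2`.
  refine ⟨fun x => (ZMod.castHom hn (ZMod 2) x : ZMod 2), isPolyColoring_two_iff.2 fun a hab => ?_⟩
  change ZMod.castHom hn (ZMod 2) (a + b) = ZMod.castHom hn (ZMod 2) a at hab
  rw [map_add, add_eq_left] at hab
  have hb : IsUnit b := by
    rcases Nat.eq_zero_or_pos n with rfl | hpos
    · rw [Nat.gcd_zero_right] at hgcd
      exact Int.isUnit_iff_natAbs_eq.2 hgcd
    · have : NeZero n := ⟨hpos.ne'⟩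
      rw [← ZMod.natCast_zmod_val b]
      exact (ZMod.isUnit_iff_coprime _ _).2 hgcd
  exact (hb.map (ZMod.castHom hn (ZMod 2))).ne_zero hab

/-- For `S = {0, b} ⊆ ZMod n` with `gcd(b, n) = 1` and `n ≥ 3`:
`p_n(S) = 1` if the order of `b` is odd, and `p_n(S) = 2` if it is even. -/
theorem polyNum_of_pair (n : ℕ) (hn : 3 ≤ n) (b : ZMod n)
    (hgcd : Nat.gcd b.val n = 1) :
    (Odd (addOrderOf b) → polyNum n {0, b} = 1) ∧
    (Even (addOrderOf b) → polyNum n {0, b} = 2) := by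
  constructor
  · intro hodd
    refine IsGreatest.csSup_eq ⟨⟨_, isPolyColoring_one b⟩, ?_⟩
    rintro k ⟨χ, hχ⟩
    have hk := hχ.le_two
    by_contra hlt
    obtain rfl : k = 2 := by omega
    exact not_odd_addOrderOf_of_alternating (isPolyColoring_two_iff.1 hχ) hodd
  · intro heven
    have hdvd : addOrderOf b ∣ n := addOrderOf_dvd_of_nsmul_eq_zero (by simp)
    exact IsGreatest.csSup_eq
      ⟨exists_isPolyColoring_two (heven.two_dvd.trans hdvd) hgcd,
        fun k ⟨_, hχ⟩ => hχ.le_two⟩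
end

section
/- Let n ≥ 3 and S = {0, a, b} ⊆ ℤ_n with a, b, 0 distinct and gcd(a, b, n) = 1. Then p_n(S) = 3 if and only if 3 divides n and a and b lie in different nonzero congruence classes mod 3. -/
/-- The group of periods of a coloring `χ` of `ZMod n`. -/
def periods {n k : ℕ} (χ : ZMod n → Fin k) : AddSubgroup (ZMod n) where
  carrier := {p | ∀ x, χ (x + p) = χ x}
  zero_mem' := by simp
  add_mem' := by
    intro p q hp hq x
    rw [← add_assoc, hq, hp]
  neg_mem' := by
    intro p hp x
    simpa using (hp (x + -p)).symm

lemma isPolyColoring_triple {n k : ℕ} {a b : ZMod n} {χ : ZMod n → Fin k} :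
    IsPolyColoring {0, a, b} χ ↔
      ∀ x c, χ x = c ∨ χ (x + a) = c ∨ χ (x + b) = c := by
  simp [IsPolyColoring]

lemma IsPolyColoring.le_three {n k : ℕ} {a b : ZMod n} {χ : ZMod n → Fin k}
    (h : IsPolyColoring {0, a, b} χ) : k ≤ 3 := by
  rw [isPolyColoring_triple] at h
  have hsub : (Finset.univ : Finset (Fin k)) ⊆ {χ 0, χ (0 + a), χ (0 + b)} := by
    intro c _
    simpa [eq_comm] using h 0 c
  simpa using (Finset.card_le_card hsub).trans Finset.card_le_three

lemma polyNum_eq_three_iff_exists {n : ℕ} {a b : ZMod n} :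
    polyNum n {0, a, b} = 3 ↔ ∃ χ : ZMod n → Fin 3, IsPolyColoring {0, a, b} χ := by
  have hbdd : ∀ k ∈ {k : ℕ | ∃ χ : ZMod n → Fin k, IsPolyColoring {0, a, b} χ}, k ≤ 3 :=
    fun k ⟨_, h⟩ => h.le_three
  constructor
  · intro h
    -- The one-color coloring shows that the supremum is over a nonempty set.
    have hne : {k : ℕ | ∃ χ : ZMod n → Fin k, IsPolyColoring {0, a, b} χ}.Nonempty :=
      ⟨1, fun _ => 0, fun _ c => ⟨0, by simp, Subsingleton.elim _ _⟩⟩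
    have := Nat.sSup_mem hne ⟨3, hbdd⟩
    rw [← polyNum, h] at this
    exact this
  · intro h
    exact le_antisymm (csSup_le ⟨3, h⟩ hbdd) (le_csSup ⟨3, hbdd⟩ h)

lemma IsPolyColoring.distinct {n : ℕ} {a b : ZMod n} {χ : ZMod n → Fin 3}
    (h : IsPolyColoring {0, a, b} χ) (x : ZMod n) :
    χ x ≠ χ (x + a) ∧ χ x ≠ χ (x + b) ∧ χ (x + a) ≠ χ (x + b) := by
  have key : ∀ p q r : Fin 3, (∀ c, p = c ∨ q = c ∨ r = c) → p ≠ q ∧ p ≠ r ∧ q ≠ r := by decide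
  exact key _ _ _ (isPolyColoring_triple.1 h x)

lemma IsPolyColoring.add_mem_periods {n : ℕ} {a b : ZMod n} {χ : ZMod n → Fin 3}
    (h : IsPolyColoring {0, a, b} χ) : a + b ∈ periods χ := by
  intro x
  have h0 := h.distinct x
  have h1 := (h.distinct (x + a)).2.1
  have h2 := (h.distinct (x + b)).1
  rw [add_right_comm] at h2
  rw [← add_assoc]
  omega

lemma IsPolyColoring.three_mul_mem_periods {n : ℕ} {a b : ZMod n} {χ : ZMod n → Fin 3}
    (h : IsPolyColoring {0, a, b} χ) : 3 * a ∈ periods χ := by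
  -- As `a + b` is a period, the triple at `y + a` has the colors of `y + a`, `y + a + a` and `y`.
  have hd : ∀ y, χ y ≠ χ (y + a) ∧ χ y ≠ χ (y + a + a) ∧ χ (y + a) ≠ χ (y + a + a) := by
    intro y
    have h0 := h.distinct (y + a)
    have hp : χ (y + a + b) = χ y := by
      rw [add_assoc]
      exact h.add_mem_periods y
    rw [hp] at h0
    exact ⟨h0.2.1.symm, h0.2.2.symm, h0.1⟩
  intro x
  have h0 := hd x
  have h1 := hd (x + a)
  rw [show x + 3 * a = x + a + a + a by ring]
  omega

lemma IsPolyColoring.notMem_periods {n : ℕ} {a b : ZMod n} {χ : ZMod n → Fin 3}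
    (h : IsPolyColoring {0, a, b} χ) : a ∉ periods χ :=
  fun ha => (h.distinct 0).1 (ha 0).symm

/-- Since `a` and `b` generate `ZMod n`, the periods `3a` and `3b` yield the period `3`. -/
lemma IsPolyColoring.three_mem_periods {n : ℕ} {a b : ZMod n} {χ : ZMod n → Fin 3}
    (h : IsPolyColoring {0, a, b} χ)
    (hgcd : Nat.gcd a.val (Nat.gcd b.val n) = 1) (hn : n ≠ 0) : 3 ∈ periods χ := by
  have : NeZero n := ⟨hn⟩
  have h3a := h.three_mul_mem_periods
  have h3b : 3 * b ∈ periods χ := by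
    convert sub_mem (nsmul_mem h.add_mem_periods 3) h3a using 1
    simp only [nsmul_eq_mul]
    push_cast
    ring
  have e1 := Nat.gcd_eq_gcd_ab a.val (Nat.gcd b.val n)
  have e2 := Nat.gcd_eq_gcd_ab b.val n
  generalize Nat.gcdA a.val (Nat.gcd b.val n) = u at e1
  generalize Nat.gcdB a.val (Nat.gcd b.val n) = v at e1
  generalize Nat.gcdA b.val n = w at e2
  rw [e2, hgcd] at e1
  have e3 := congrArg (Int.cast : ℤ → ZMod n) e1
  push_cast at e3
  simp only [ZMod.natCast_val, ZMod.cast_id', id, CharP.cast_eq_zero, zero_mul, add_zero] at e3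
  convert add_mem (zsmul_mem h3a u) (zsmul_mem h3b (w * v)) using 1
  simp only [zsmul_eq_mul]
  push_cast
  linear_combination 3 * e3

/-- As `3` is a period and `1` is not, only multiples of `3` are periods. -/
lemma IsPolyColoring.three_dvd {n : ℕ} {a b : ZMod n} {χ : ZMod n → Fin 3}
    (h : IsPolyColoring {0, a, b} χ)
    (hgcd : Nat.gcd a.val (Nat.gcd b.val n) = 1) (hn : n ≠ 0) {m : ℕ}
    (hm : (m : ZMod n) ∈ periods χ) : 3 ∣ m := by
  have : NeZero n := ⟨hn⟩
  have h3 := h.three_mem_periods hgcd hn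
  by_contra hdvd
  -- Otherwise `1` is an integer combination of the periods `3` and `m`, and so `a` is a period.
  have e := Nat.gcd_eq_gcd_ab 3 m
  rw [(Nat.Prime.coprime_iff_not_dvd Nat.prime_three).2 hdvd] at e
  have e3 := congrArg (Int.cast : ℤ → ZMod n) e
  push_cast at e3
  have h1 := nsmul_mem (add_mem (zsmul_mem h3 (Nat.gcdA 3 m)) (zsmul_mem hm (Nat.gcdB 3 m))) a.val
  refine h.notMem_periods ?_
  convert h1 using 1
  simp only [zsmul_eq_mul, nsmul_eq_mul, ZMod.natCast_val, ZMod.cast_id', id]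
  linear_combination a * e3

/-- For `S = {0, a, b} ⊆ ZMod n` with `0, a, b` distinct and
`gcd(a, b, n) = 1` (`n ≥ 3`), `p_n(S) = 3` iff `3 ∣ n` and the least
nonnegative representatives of `a` and `b` are `≡ 1` and `≡ 2 (mod 3)`
in some order. -/
theorem polyNum_eq_three_iff (n : ℕ) (hn : 3 ≤ n) (a b : ZMod n)
    (hab : a ≠ b) (ha : a ≠ 0) (hb : b ≠ 0)
    (hgcd : Nat.gcd a.val (Nat.gcd b.val n) = 1) :
    polyNum n {0, a, b} = 3 ↔
      (3 ∣ n ∧ ((a.val % 3 = 1 ∧ b.val % 3 = 2) ∨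
        (a.val % 3 = 2 ∧ b.val % 3 = 1))) := by
  have : NeZero n := ⟨by omega⟩
  rw [polyNum_eq_three_iff_exists]
  constructor
  · rintro ⟨χ, h⟩
    have key {m : ℕ} := h.three_dvd hgcd (by omega) (m := m)
    have hab' : 3 ∣ a.val + b.val := key (by simpa using h.add_mem_periods)
    have ha' : ¬ 3 ∣ a.val := by
      rintro ⟨t, ht⟩
      refine h.notMem_periods ?_
      convert nsmul_mem (h.three_mem_periods hgcd (by omega)) t using 1
      rw [← ZMod.natCast_zmod_val a, ht, nsmul_eq_mul]
      push_cast
      ring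
    refine ⟨key (by simp [zero_mem]), ?_⟩
    omega
  · rintro ⟨hdvd, hres⟩
    have hval (y : ZMod n) : ZMod.castHom hdvd (ZMod 3) y = ((y.val % 3 : ℕ) : ZMod 3) := by
      simp
    refine ⟨fun x => (ZMod.castHom hdvd (ZMod 3) x : ZMod 3), isPolyColoring_triple.2 ?_⟩
    intro x c
    simp only [map_add]
    rw [hval a, hval b]
    have h12 : ∀ y c : ZMod 3, y = c ∨ y + ((1 : ℕ) : ZMod 3) = c ∨ y + ((2 : ℕ) : ZMod 3) = c := by
      decide
    rcases hres with ⟨h1, h2⟩ | ⟨h1, h2⟩ <;> rw [h1, h2]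
    · exact h12 _ c
    · exact (h12 _ c).imp_right Or.symm
end

section
/- If n is odd, n ≥ 5, and n ≠ 7, then there exists a {0,1,3}-polychromatic coloring of ℤ_n with two colors; that is, there is a 2-coloring χ : ℤ_n → Fin 2 such that for every x ∈ ℤ_n, the set {x, x+1, x+3} contains both colors. -/
/-!
A colouring of `ZMod n` is a cyclic binary word of length `n`, and it is `{0,1,3}`-polychromatic
iff no position `i` carries the same letter as both `i + 1` and `i + 3`.

The block `0011` may be repeated cyclically. It remains to correct the length modulo `4`:
* if `n ≡ 1 [MOD 4]`, the word `(0011)^k 0` works for every `k ≥ 1`;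
* if `n ≡ 3 [MOD 4]`, then `n ≥ 11`, and the word `00111000111 (0011)^k` works for every `k ≥ 0`.
-/

/-- Reduction to words: the set `P` of positions below `n` carrying the letter `1` gives a
polychromatic colouring as soon as no cyclic pattern `i, i + 1, i + 3` is constant. -/
lemma exists_coloring_of_word (n : ℕ) (hn : 5 ≤ n) (P : ℕ → Prop)
    (h : ∀ i < n, ¬ (P i ∧ P ((i + 1) % n) ∧ P ((i + 3) % n)) ∧
      (P i ∨ P ((i + 1) % n) ∨ P ((i + 3) % n))) :
    ∃ χ : ZMod n → Fin 2, ∀ x : ZMod n, ∀ c : Fin 2,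
      ∃ s ∈ ({0, 1, 3} : Set (ZMod n)), χ (x + s) = c := by
  classical
  have : NeZero n := ⟨by omega⟩
  refine ⟨fun x => if P x.val then 1 else 0, fun x c => ?_⟩
  have h1 : (x + 1).val = (x.val + 1) % n := by
    have := ZMod.val_natCast_of_lt (show 1 < n by omega)
    rw [ZMod.val_add, ← Nat.cast_one, this]
  have h3 : (x + 3).val = (x.val + 3) % n := by
    have := ZMod.val_natCast_of_lt (show 3 < n by omega)
    rw [ZMod.val_add, ← Nat.cast_ofNat, this]
  have hx := h x.val x.val_lt
  simp only [Set.mem_insert_iff, Set.mem_singleton_iff, exists_eq_or_imp, exists_eq_left,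
    add_zero, h1, h3]
  fin_cases c <;> simp <;> tauto

/-- The value of `(i + d) % n` when at most one wrap-around occurs, in a form `omega` can use. -/
lemma add_mod_cases (n i d : ℕ) (hi : i < n) (hd : d ≤ n) :
    (i + d < n ∧ (i + d) % n = i + d) ∨ (n ≤ i + d ∧ (i + d) % n = i + d - n) := by
  rcases lt_or_ge (i + d) n with h | h
  · exact Or.inl ⟨h, Nat.mod_eq_of_lt h⟩
  · exact Or.inr ⟨h, by rw [Nat.mod_eq_sub_mod h, Nat.mod_eq_of_lt (by omega)]⟩


/-- If `n` is odd, `n ≥ 5`, `n ≠ 7`, then there is a 2-coloring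
`χ : ZMod n → Fin 2` such that every translate `{x, x+1, x+3}` of `{0,1,3}`
contains both colors. -/
theorem exists_poly_coloring_013 (n : ℕ) (hodd : Odd n) (hn : 5 ≤ n)
    (hn7 : n ≠ 7) :
    ∃ χ : ZMod n → Fin 2, ∀ x : ZMod n, ∀ c : Fin 2,
      ∃ s ∈ ({0, 1, 3} : Set (ZMod n)), χ (x + s) = c := by
  have h4 : n % 4 = 1 ∨ n % 4 = 3 := by
    have := Nat.odd_iff.mp hodd
    omega
  rcases h4 with h4 | h4
  · refine exists_coloring_of_word n hn (fun i => 2 ≤ i % 4) fun i hi => ?_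
    have h1 := add_mod_cases n i 1 hi (by omega)
    have h3 := add_mod_cases n i 3 hi (by omega)
    generalize (i + 1) % n = a at *
    generalize (i + 3) % n = b at *
    omega
  · -- Past position `11 ≡ 3 [MOD 4]`, the block `0011` has its ones where `(i + 1) % 4 ≥ 2`.
    refine exists_coloring_of_word n hn
      (fun i => (2 ≤ i ∧ i ≤ 4) ∨ (8 ≤ i ∧ i ≤ 10) ∨ (11 ≤ i ∧ 2 ≤ (i + 1) % 4)) fun i hi => ?_
    have h1 := add_mod_cases n i 1 hi (by omega)
    have h3 := add_mod_cases n i 3 hi (by omega)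
    generalize (i + 1) % n = a at *
    generalize (i + 3) % n = b at *
    rcases h1 with h1 | h1 <;> rcases h3 with h3 | h3 <;> constructor <;> omega
end

section
/- Let n ≥ 9 with n odd, let b be odd with 3 ≤ b < n, and let S = {0, 1, b} ⊆ ℤ_n. Then there exists an S-polychromatic coloring of ℤ_n with two colors; that is, there is χ : ℤ_n → Fin 2 such that for every x ∈ ℤ_n, the set {x, x+1, x+b} contains both colors. -/
/-!
Reflecting `x ↦ 1 - x` turns translates of `{0, 1, b}` into translates of `{0, 1, n + 1 - b}`, and
`n + 1 - b` is again odd, so we may assume `2 * b ≤ n + 1`.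

In that range there is an odd `m` with `m * b ≤ 2 * n` and `n ≤ m * (b - 1)`
(`exists_odd_multiplier`). Colour the integer `y` by the parity of `y + ⌊m * y / n⌋`. Adding `n`
to `y` changes this number by `n + m`, which is even, so the colouring descends to `ℤ_n`. The
points `y` and `y + 1` have the same colour exactly when the floor jumps between them, and then
the inequalities on `m` force the floor to grow by exactly `2` between `y` and `y + b`; since `b`
is odd, `y + b` has the other colour (`exists_periodic_of_small`).
-/

/-- A 2-colouring of `ℤ`, given as a predicate of period `n`, for which no translate of
`{0, 1, b}` is monochromatic. -/
def IsGoodPredicate (n b : ℤ) (P : ℤ → Prop) : Prop :=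
  Function.Periodic P n ∧ ∀ y, ¬ ((P y ↔ P (y + 1)) ∧ (P y ↔ P (y + b)))

/-- The witness is the largest odd `m` with `m * b ≤ 2 * n`. Here `m` is the number of jumps of
`⌊m * y / n⌋` in one period, and the two bounds force exactly two jumps in each window of length
`b` that starts at a jump. -/
lemma exists_odd_multiplier (n b : ℤ) (hn : 9 ≤ n) (hb : Odd b) (hb3 : 3 ≤ b)
    (hbn : 2 * b ≤ n + 1) :
    ∃ m : ℤ, Odd m ∧ 0 ≤ m ∧ m * b ≤ 2 * n ∧ n ≤ m * (b - 1) := by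
  obtain ⟨j, hj⟩ : ∃ j, j = (2 * n - b) / (2 * b) := ⟨_, rfl⟩
  have h1 : 2 * b * j ≤ 2 * n - b := by
    rw [hj]; exact Int.mul_ediv_self_le (by omega)
  have h2 : 2 * n - b < 2 * b * j + 2 * b := by
    rw [hj]; exact Int.lt_mul_ediv_self_add (by omega)
  have hj1 : 1 ≤ j := by
    by_contra h
    have : j ≤ 0 := by omega
    nlinarith
  refine ⟨2 * j + 1, ⟨j, rfl⟩, by omega, by linarith, ?_⟩
  rcases hb3.eq_or_lt with rfl | hb4
  · omega
  · have hb5 : 5 ≤ b := by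
      obtain ⟨k, rfl⟩ := hb
      omega
    -- `2 * n < (m + 2) * b` gives the bound as soon as `(m - 2) * (b - 2) ≥ 3`, where `m = 2 * j + 1`
    nlinarith [mul_nonneg (sub_nonneg.2 hj1) (by linarith : (0 : ℤ) ≤ b - 2)]

lemma exists_periodic_of_small (n b : ℤ) (hn : 9 ≤ n) (hnodd : Odd n) (hb : Odd b) (hb3 : 3 ≤ b)
    (hbn : 2 * b ≤ n + 1) : ∃ P, IsGoodPredicate n b P := by
  obtain ⟨m, hm, hm0, hmb, hnm⟩ := exists_odd_multiplier n b hn hb hb3 hbn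
  refine ⟨fun y => Even (y + m * y / n), fun y => ?_, fun y => ?_⟩
  · have : m * (y + n) / n = m * y / n + m := by
      rw [mul_add, Int.add_mul_ediv_right _ _ (by omega)]
    simp only [this, eq_iff_iff]
    grind
  · have hmn : m ≤ n := by nlinarith
    obtain ⟨q, hq⟩ : ∃ q, q = m * y / n := ⟨_, rfl⟩
    have h1 : n * q ≤ m * y := by rw [hq]; exact Int.mul_ediv_self_le (by omega)
    have h2 : m * y < n * q + n := by rw [hq]; exact Int.lt_mul_ediv_self_add (by omega)
    rintro ⟨hA, hB⟩
    simp only [← hq] at hA hB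
    rcases lt_or_ge (m * y + m) (n * q + n) with h | h
    · have : m * (y + 1) / n = q := by
        rw [Int.ediv_eq_iff_of_pos (by omega)]
        constructor <;> nlinarith
      rw [this] at hA
      grind
    -- With `r = m * y - n * q`, the floor jumps at `y`, so `n - m ≤ r < n` and
    -- `2 * n ≤ n + m * (b - 1) ≤ r + m * b < n + m * b ≤ 3 * n`.
    · have : m * (y + b) / n = q + 2 := by
        rw [Int.ediv_eq_iff_of_pos (by omega)]
        constructor <;> nlinarith
      rw [this] at hB
      grind

lemma exists_periodic (n b : ℤ) (hn : 9 ≤ n) (hnodd : Odd n) (hb : Odd b) (hb3 : 3 ≤ b)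
    (hbn : b < n) : ∃ P, IsGoodPredicate n b P := by
  by_cases h : 2 * b ≤ n + 1
  · exact exists_periodic_of_small n b hn hnodd hb hb3 h
  · obtain ⟨P, hP, hQ⟩ := exists_periodic_of_small n (n + 1 - b) hn hnodd (by grind)
      (by grind) (by omega)
    refine ⟨fun y => P (1 - y), fun y => ?_, fun y => ?_⟩
    · show P (1 - (y + n)) = P (1 - y)
      rw [← hP (1 - (y + n))]
      congr 1; ring
    · have h3 := hQ (-y)
      have e : P (-y + (n + 1 - b)) = P (1 - (y + b)) := by
        rw [← hP (1 - (y + b))]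
        congr 1; ring
      have e1 : -y + 1 = 1 - y := by ring
      have e2 : 1 - (y + 1) = -y := by ring
      rw [e, e1] at h3
      simp only [e2]
      tauto

/-- If `n ≥ 9` is odd and `b` is odd with `3 ≤ b < n`, then there
is a 2-coloring `χ : ZMod n → Fin 2` such that every translate `{x, x+1, x+b}`
of `{0, 1, b}` contains both colors. -/
theorem exists_poly_coloring_01b_odd (n b : ℕ) (hn : 9 ≤ n) (hnodd : Odd n)
    (hbodd : Odd b) (hb3 : 3 ≤ b) (hbn : b < n) :
    ∃ χ : ZMod n → Fin 2, ∀ x : ZMod n, ∀ c : Fin 2,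
      ∃ s ∈ ({0, 1, (b : ZMod n)} : Set (ZMod n)), χ (x + s) = c := by
  classical
  obtain ⟨P, hP, hQ⟩ := exists_periodic n b (by exact_mod_cast hn) (by exact_mod_cast hnodd)
    (by exact_mod_cast hbodd) (by exact_mod_cast hb3) (by exact_mod_cast hbn)
  have : NeZero n := ⟨by omega⟩
  refine ⟨fun x => if P (x.val : ℤ) then 0 else 1, fun x c => ?_⟩
  have key : ∀ t : ℕ, P ((x + (t : ZMod n)).val : ℤ) = P ((x.val : ℤ) + t) := by
    intro t
    have e : x + (t : ZMod n) = ((x.val + t : ℕ) : ZMod n) := by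
      rw [Nat.cast_add, ZMod.natCast_zmod_val]
    rw [e, ZMod.val_natCast, Int.natCast_mod, Int.emod_def, mul_comm]
    push_cast
    exact hP.sub_int_mul_eq _
  have k0 : P ((x + 0).val : ℤ) = P (x.val : ℤ) := by rw [add_zero]
  have k1 := key 1
  have kb := key b
  have hx := hQ x.val
  simp only [Nat.cast_one] at k1
  simp only [Set.mem_insert_iff, Set.mem_singleton_iff, exists_eq_or_imp, exists_eq_left,
    k0, k1, kb]
  clear hP hQ key k0 k1 kb
  generalize (x.val : ℤ) = y at hx ⊢
  fin_cases c <;> simp <;> tauto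
end

section
/- For all integers s, t ≥ 2, there exists a 2-coloring χ : ℤ_s × ℤ_t → Fin 2 of the entries of an s × t toroidal array such that every ell-tile gets both colors; that is, for all (i, j) ∈ ℤ_s × ℤ_t, the three entries χ(i, j), χ(i, j+1), χ(i+1, j) are not all the same color (indices taken mod s and mod t). -/
/-!
If one of the two side lengths is even, colour by the parity along that side. Suppose both are odd.
Colour each row alternately, with exactly one defect: a column `d` such that columns `d` and `d + 1`
receive the same colour `c`. The only ell-tile based in this row that can fail is the one at column
`d`, and it fails only if the next row also has colour `c` at column `d`. Let row `0` have `d = 0`,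
`c = 1`, let row `1` have `d = 1`, `c = 1`, and let rows `i = 2, …, s - 1` have `d = 0` and `c` equal
to the parity of `i`. Each row then has the colour opposite to `c` below its defect, including the
passage from row `s - 1`, where `c = 0` because `s - 1` is even, back to row `0`.
-/

theorem val_add_one_eq_ite (n : ℕ) (hn : 2 ≤ n) (i : ZMod n) :
    (i + 1).val = if i.val + 1 = n then 0 else i.val + 1 := by
  have : NeZero n := ⟨by omega⟩
  have : Fact (1 < n) := ⟨by omega⟩
  have h := i.val_lt
  rw [ZMod.val_add, ZMod.val_one]
  split_ifs with h1
  · rw [h1, Nat.mod_self]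
  · exact Nat.mod_eq_of_lt (by omega)

/-- A set of positions given by representatives yields a colouring of the torus as soon as no
ell-tile lies inside the set or inside its complement. -/
theorem exists_coloring_of_pred (s t : ℕ) (hs : 2 ≤ s) (ht : 2 ≤ t) (P : ℕ → ℕ → Prop)
    (hP : ∀ i j, i < s → j < t →
      ¬ ((P i j ↔ P i (if j + 1 = t then 0 else j + 1)) ∧
        (P i j ↔ P (if i + 1 = s then 0 else i + 1) j))) :
    ∃ χ : ZMod s × ZMod t → Fin 2, ∀ i : ZMod s, ∀ j : ZMod t,
      ¬ (χ (i, j) = χ (i, j + 1) ∧ χ (i, j) = χ (i + 1, j)) := by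
  classical
  have : NeZero s := ⟨by omega⟩
  have : NeZero t := ⟨by omega⟩
  refine ⟨fun p => if P p.1.val p.2.val then 1 else 0, fun i j => ?_⟩
  have key : ∀ A B : Prop, ((if A then (1 : Fin 2) else 0) = if B then 1 else 0) → (A ↔ B) := by
    intro A B h
    by_cases hA : A <;> by_cases hB : B <;> simp_all
  rintro ⟨h1, h2⟩
  have h1' := key _ _ h1
  have h2' := key _ _ h2
  simp only [val_add_one_eq_ite s hs, val_add_one_eq_ite t ht] at h1' h2'
  exact hP _ _ i.val_lt j.val_lt ⟨h1', h2'⟩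

/-- For all `s, t ≥ 2` there is a 2-coloring of the `s × t`
toroidal array (rows indexed by `ZMod s`, columns by `ZMod t`) such that every
ell-tile `{(i,j), (i,j+1), (i+1,j)}` gets both colors. -/
theorem exists_ell_tile_two_coloring (s t : ℕ) (hs : 2 ≤ s) (ht : 2 ≤ t) :
    ∃ χ : ZMod s × ZMod t → Fin 2, ∀ i : ZMod s, ∀ j : ZMod t,
      ¬ (χ (i, j) = χ (i, j + 1) ∧ χ (i, j) = χ (i + 1, j)) := by
  by_cases hs2 : s % 2 = 0
  · apply exists_coloring_of_pred s t hs ht (fun i _ => i % 2 = 0)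
    intro i j hi hj
    split_ifs <;> omega
  by_cases ht2 : t % 2 = 0
  · apply exists_coloring_of_pred s t hs ht (fun _ j => j % 2 = 0)
    intro i j hi hj
    split_ifs <;> omega
  -- `j = 0 ∨ j % 2 = 1` is the row with `d = 0`, `c = 1`; row `1` is shifted to have `d = 1`.
  apply exists_coloring_of_pred s t hs ht (fun i j =>
    (i = 1 ∧ (j = 1 ∨ (j ≠ 0 ∧ j % 2 = 0))) ∨
    (i ≠ 1 ∧ (i = 0 ∨ i % 2 = 1) ∧ (j = 0 ∨ j % 2 = 1)) ∨
    (i ≠ 1 ∧ i ≠ 0 ∧ i % 2 = 0 ∧ ¬ (j = 0 ∨ j % 2 = 1)))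
  intro i j hi hj
  rcases (by omega : i = 0 ∨ i = 1 ∨ 2 ≤ i) with rfl | rfl | h <;>
  rcases (by omega : j = 0 ∨ j = 1 ∨ 2 ≤ j) with rfl | rfl | h' <;>
  split_ifs <;> first | omega | grind (splits := 20)
end

section
/- Let n ≥ 3 and S = {0, a, b} ⊆ ℤ_n, where gcd(a, b, n) = 1 but gcd(a, n) > 1 and gcd(b, n) > 1. Then p_n(S) ≥ 2; that is, there is a 2-coloring χ : ℤ_n → Fin 2 such that for every x ∈ ℤ_n, the set {x, x+a, x+b} contains both colors. -/
/-- If `c` is coprime to `m`, every residue mod `m` is a multiple of `c`. -/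
lemma exists_mul_eq_add_mul {c m : ℕ} (h : Nat.Coprime c m) (i : ℤ) :
    ∃ y z : ℤ, y * c = i + m * z := by
  obtain ⟨u, v, huv⟩ := Nat.isCoprime_iff_coprime.mpr h
  exact ⟨i * u, -(i * v), by linear_combination i * huv⟩

/-- Some multiple of the triple `{0, a, b}` has all three cyclic gaps at most `n / 2`. -/
lemma exists_multiplier (n : ℕ) (hn : 3 ≤ n) (a b : ZMod n)
    (hgcd : Nat.gcd a.val (Nat.gcd b.val n) = 1)
    (han : 1 < Nat.gcd a.val n) (hbn : 1 < Nat.gcd b.val n) :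
    ∃ (k : ZMod n) (A B : ℕ), k * a = A ∧ k * b = B ∧
      2 * A ≤ n ∧ n ≤ 2 * B ∧ B < n ∧ 2 * B ≤ n + 2 * A := by
  have : NeZero n := ⟨by omega⟩
  have had : Nat.gcd a.val n ∣ a.val := Nat.gcd_dvd_left _ _
  have hnd : Nat.gcd a.val n ∣ n := Nat.gcd_dvd_right _ _
  have hbe : Nat.gcd b.val n ∣ b.val := Nat.gcd_dvd_left _ _
  have hne : Nat.gcd b.val n ∣ n := Nat.gcd_dvd_right _ _
  have hae : Nat.Coprime a.val (Nat.gcd b.val n) := hgcd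
  have hbd : Nat.Coprime b.val (Nat.gcd a.val n) := by
    rw [Nat.Coprime, ← hgcd, Nat.gcd_left_comm]
  generalize Nat.gcd a.val n = d at *
  generalize Nat.gcd b.val n = e at *
  have hde : Nat.Coprime d e := Nat.Coprime.coprime_dvd_left had hae
  obtain ⟨g, hg⟩ := hde.mul_dvd_of_dvd_of_dvd hnd hne
  obtain ⟨a', ha'⟩ := had
  obtain ⟨b', hb'⟩ := hbe
  obtain ⟨Y, z, hY⟩ := exists_mul_eq_add_mul hae ((e / 2 : ℕ) : ℤ)
  obtain ⟨X, w, hX⟩ := exists_mul_eq_add_mul hbd (((d + 1) / 2 : ℕ) : ℤ)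
  have hn0 : ((d : ZMod n) * e * g) = 0 := by
    have := ZMod.natCast_self n
    rw [hg] at this
    push_cast at this
    rw [← hg] at this
    exact this
  have hY' : (Y : ZMod n) * a = ((e / 2 : ℕ) : ZMod n) + e * z := by
    have := congrArg (Int.cast : ℤ → ZMod n) hY
    simpa only [Int.cast_mul, Int.cast_add, Int.cast_natCast, ZMod.natCast_zmod_val] using this
  have hX' : (X : ZMod n) * b = (((d + 1) / 2 : ℕ) : ZMod n) + d * w := by
    have := congrArg (Int.cast : ℤ → ZMod n) hX
    simpa only [Int.cast_mul, Int.cast_add, Int.cast_natCast, ZMod.natCast_zmod_val] using this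
  have haa : a = (d : ZMod n) * a' := by
    rw [← ZMod.natCast_zmod_val a, ha', Nat.cast_mul]
  have hbb : b = (e : ZMod n) * b' := by
    rw [← ZMod.natCast_zmod_val b, hb', Nat.cast_mul]
  have hgpos : 0 < g := Nat.pos_of_ne_zero (by rintro rfl; omega)
  refine ⟨g * (e * X + d * Y), g * d * (e / 2), g * e * ((d + 1) / 2), ?_, ?_, ?_, ?_, ?_, ?_⟩
  · rw [Nat.cast_mul, Nat.cast_mul]
    linear_combination (g * e * X : ZMod n) * haa + (g * d : ZMod n) * hY' + (X * a' + z) * hn0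
  · rw [Nat.cast_mul, Nat.cast_mul]
    linear_combination (g * d * Y : ZMod n) * hbb + (g * e : ZMod n) * hX' + (Y * b' + w) * hn0
  · have h : 2 * (e / 2) ≤ e := by omega
    have := Nat.mul_le_mul_left (g * d) h
    rw [hg]; linarith
  · have h : d ≤ 2 * ((d + 1) / 2) := by omega
    have := Nat.mul_le_mul_left (g * e) h
    rw [hg]; linarith
  · have h : (d + 1) / 2 < d := by omega
    have := Nat.mul_lt_mul_of_pos_left h (Nat.mul_pos hgpos (by omega : 0 < e))
    rw [hg]; linarith
  · have h1 : 2 * ((d + 1) / 2) ≤ d + 1 := by omega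
    have h2 : e ≤ 2 * (e / 2) + 1 := by omega
    -- After division by `g`, the bound follows from `e + d ≤ d * e`.
    have h3 : e + d ≤ d * e := by nlinarith
    have h4 := Nat.mul_le_mul_left (g * e) h1
    have h5 := Nat.mul_le_mul_left (g * d) h2
    have h6 := Nat.mul_le_mul_left g h3
    rw [hg]; linarith

/-- Let `n ≥ 3` and `S = {0, a, b} ⊆ ZMod n` with
`gcd(a, b, n) = 1` but `gcd(a, n) > 1` and `gcd(b, n) > 1`. Then
`p_n(S) ≥ 2`; that is, there is a 2-coloring such that every translate
`{x, x+a, x+b}` contains both colors. -/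
theorem polyNum_ge_two (n : ℕ) (hn : 3 ≤ n) (a b : ZMod n)
    (hgcd : Nat.gcd a.val (Nat.gcd b.val n) = 1)
    (han : 1 < Nat.gcd a.val n) (hbn : 1 < Nat.gcd b.val n) :
    2 ≤ polyNum n {0, a, b} ∧
      ∃ χ : ZMod n → Fin 2, ∀ x : ZMod n, ∀ c : Fin 2,
        ∃ s ∈ ({0, a, b} : Set (ZMod n)), χ (x + s) = c := by
  have : NeZero n := ⟨by omega⟩
  have key : ∃ χ : ZMod n → Fin 2, ∀ x : ZMod n, ∀ c : Fin 2,
      ∃ s ∈ ({0, a, b} : Set (ZMod n)), χ (x + s) = c := by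
    obtain ⟨k, A, B, hA, hB, h1, h2, h3, h4⟩ := exists_multiplier n hn a b hgcd han hbn
    refine ⟨fun x => if 2 * (k * x).val < n then 0 else 1, fun x c => ?_⟩
    have hy : (k * x).val < n := ZMod.val_lt _
    have hxa : (k * (x + a)).val = ((k * x).val + A) % n := by
      rw [mul_add, hA, ZMod.val_add, ZMod.val_natCast, Nat.add_mod_mod]
    have hxb : (k * (x + b)).val = ((k * x).val + B) % n := by
      rw [mul_add, hB, ZMod.val_add, ZMod.val_natCast, Nat.add_mod_mod]
    simp only [Set.mem_insert_iff, Set.mem_singleton_iff, exists_eq_or_imp, exists_eq_left,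
      add_zero, hxa, hxb]
    generalize (k * x).val = y at *
    have hmod : ∀ C < n, (y + C) % n = if y + C < n then y + C else y + C - n := by
      intro C hC
      split_ifs with h
      · exact Nat.mod_eq_of_lt h
      · rw [Nat.mod_eq_sub_mod (by omega), Nat.mod_eq_of_lt (by omega)]
    rw [hmod A (by omega), hmod B h3]
    fin_cases c <;> simp <;> split_ifs <;> omega
  refine ⟨le_csSup ⟨n, ?_⟩ key, key⟩
  -- A polychromatic coloring is surjective, so it has at most `n` colors.
  rintro m ⟨χ, hχ⟩
  have hs : Function.Surjective χ := fun c => by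
    obtain ⟨s, -, h⟩ := hχ 0 c
    exact ⟨_, h⟩
  simpa [ZMod.card] using Fintype.card_le_of_surjective χ hs
end

section
/- There is no 2-coloring χ : ℤ_7 → Fin 2 such that every translate of S = {0, 1, 3} contains both colors; consequently p_7({0,1,3}) = 1. -/
theorem fano_no_splitting_set (p : ZMod 7 → Prop)
    (h₁ : ∀ a, ∃ s ∈ ({0, 1, 3} : Set (ZMod 7)), p (a + s))
    (h₂ : ∀ a, ∃ s ∈ ({0, 1, 3} : Set (ZMod 7)), ¬ p (a + s)) : False := by
  have e₁ : ∀ a, p a ∨ p (a + 1) ∨ p (a + 3) := fun a => by simpa using h₁ a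
  have e₂ : ∀ a, ¬ p a ∨ ¬ p (a + 1) ∨ ¬ p (a + 3) := fun a => by
    simpa [-not_and, imp_iff_not_or] using h₂ a
  -- The seven lines, with their points reduced modulo 7.
  have l₀ : p 0 ∨ p 1 ∨ p 3 := e₁ 0
  have l₁ : p 1 ∨ p 2 ∨ p 4 := e₁ 1
  have l₂ : p 2 ∨ p 3 ∨ p 5 := e₁ 2
  have l₃ : p 3 ∨ p 4 ∨ p 6 := e₁ 3
  have l₄ : p 4 ∨ p 5 ∨ p 0 := e₁ 4
  have l₅ : p 5 ∨ p 6 ∨ p 1 := e₁ 5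
  have l₆ : p 6 ∨ p 0 ∨ p 2 := e₁ 6
  have m₀ : ¬ p 0 ∨ ¬ p 1 ∨ ¬ p 3 := e₂ 0
  have m₁ : ¬ p 1 ∨ ¬ p 2 ∨ ¬ p 4 := e₂ 1
  have m₂ : ¬ p 2 ∨ ¬ p 3 ∨ ¬ p 5 := e₂ 2
  have m₃ : ¬ p 3 ∨ ¬ p 4 ∨ ¬ p 6 := e₂ 3
  have m₄ : ¬ p 4 ∨ ¬ p 5 ∨ ¬ p 0 := e₂ 4
  have m₅ : ¬ p 5 ∨ ¬ p 6 ∨ ¬ p 1 := e₂ 5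
  have m₆ : ¬ p 6 ∨ ¬ p 0 ∨ ¬ p 2 := e₂ 6
  clear e₁ e₂ h₁ h₂
  generalize p 0 = a₀, p 1 = a₁, p 2 = a₂, p 3 = a₃, p 4 = a₄, p 5 = a₅, p 6 = a₆ at *
  by_cases a₀ <;> by_cases a₁ <;> by_cases a₂ <;> by_cases a₃ <;> simp_all

theorem not_isPolyColoring_of_two_le {k : ℕ} (hk : 2 ≤ k) (χ : ZMod 7 → Fin k) :
    ¬ IsPolyColoring {0, 1, 3} χ := by
  intro h
  refine fano_no_splitting_set (fun x => χ x = ⟨0, by omega⟩) (fun a => h a _) fun a => ?_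
  obtain ⟨s, hs, e⟩ := h a ⟨1, by omega⟩
  exact ⟨s, hs, by simp [e]⟩

/-- There is no 2-coloring of `ZMod 7` such that every translate
of `{0, 1, 3}` contains both colors; consequently `p_7({0,1,3}) = 1`. -/
theorem no_two_coloring_fano :
    (¬ ∃ χ : ZMod 7 → Fin 2, ∀ x : ZMod 7, ∀ c : Fin 2,
        ∃ s ∈ ({0, 1, 3} : Set (ZMod 7)), χ (x + s) = c) ∧
    polyNum 7 {0, 1, 3} = 1 := by
  refine ⟨fun ⟨χ, h⟩ => not_isPolyColoring_of_two_le le_rfl χ h, ?_⟩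
  have hset : {k : ℕ | ∃ χ : ZMod 7 → Fin k, IsPolyColoring {0, 1, 3} χ} = {1} := by
    ext k
    simp only [Set.mem_ofPred_eq, Set.mem_singleton_iff]
    constructor
    · rintro ⟨χ, h⟩
      have hpos : 0 < k := (χ 0).pos
      by_contra hk
      exact not_isPolyColoring_of_two_le (by omega) χ h
    · rintro rfl
      exact ⟨fun _ => 0, fun a c => ⟨0, by simp, Subsingleton.elim _ _⟩⟩
  rw [polyNum, hset, csSup_singleton]
end

section
/- Let S be a finite nonempty set of integers and let k ≥ 1. If there exists an S-polychromatic k-coloring of ℤ (a coloring χ : ℤ → Fin k such that for every a ∈ ℤ the translate a + S contains all k colors), then there exists a positive integer n and an S-polychromatic k-coloring of ℤ_n, where S is regarded as a subset of ℤ_n via reduction mod n. -/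
/-!
If `S ⊆ [-M, M]`, then being `S`-polychromatic only constrains windows of length `2 * M + 1`. There
are finitely many colorings of such a window, so two windows of `χ`, starting at `i < j`, carry the
same coloring. Repeating the block `χ i, …, χ (j - 1)` gives a coloring of `ZMod (j - i)` in which
every window of length `2 * M + 1` already occurs in `χ` (`eq_mod_of_window_eq`), so it is again
polychromatic.
-/

/-- If the windows of length `L` starting at `i` and `i + n` agree, then `χ` agrees with the
`n`-periodic repetition of its block `[i, i + n)` on all of `[i, i + n + L)`. The block may be
shorter than the window. -/
lemma eq_mod_of_window_eq {α : Type*} (χ : ℤ → α) (i : ℤ) (n L : ℕ) (hn : 0 < n)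
    (h : ∀ t < L, χ (i + t) = χ (i + n + t)) (m : ℕ) (hm : m < n + L) :
    χ (i + m) = χ (i + (m % n : ℕ)) := by
  induction m using Nat.strong_induction_on with
  | _ m ih =>
    rcases lt_or_ge m n with hlt | hge
    · rw [Nat.mod_eq_of_lt hlt]
    · obtain ⟨t, rfl⟩ := Nat.exists_eq_add_of_le hge
      have h1 := ih t (by omega) (by omega)
      rw [Nat.add_mod_left, ← h1, h t (by omega)]
      push_cast
      rw [add_assoc]


/-- If `S` is a finite nonempty set of integers, `k ≥ 1`, and
there is an `S`-polychromatic `k`-coloring of `ℤ`, then there is a positive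
integer `n` and an `S`-polychromatic `k`-coloring of `ZMod n`, where `S` is
regarded as a subset of `ZMod n` via reduction mod `n`. -/
theorem exists_periodic_poly_coloring (S : Finset ℤ) (hS : S.Nonempty)
    (k : ℕ) (hk : 1 ≤ k) (χ : ℤ → Fin k)
    (hχ : ∀ a : ℤ, ∀ c : Fin k, ∃ s ∈ S, χ (a + s) = c) :
    ∃ n : ℕ, 0 < n ∧ ∃ χ' : ZMod n → Fin k,
      ∀ a : ZMod n, ∀ c : Fin k, ∃ s ∈ S, χ' (a + (s : ZMod n)) = c := by
  obtain ⟨M, hM⟩ : ∃ M : ℕ, ∀ s ∈ S, s.natAbs ≤ M :=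
    ⟨S.sup Int.natAbs, fun s hs => Finset.le_sup (f := Int.natAbs) hs⟩
  obtain ⟨i, j, hij, hw⟩ : ∃ i j : ℕ, i < j ∧
      ∀ t < 2 * M + 1, χ ((i : ℤ) + (t : ℕ)) = χ ((j : ℤ) + (t : ℕ)) := by
    obtain ⟨x, y, hxy, he⟩ := Finite.exists_ne_map_eq_of_infinite
      (fun (i : ℕ) (t : Fin (2 * M + 1)) => χ ((i : ℤ) + (t : ℕ)))
    have he' : ∀ t < 2 * M + 1, χ ((x : ℤ) + (t : ℕ)) = χ ((y : ℤ) + (t : ℕ)) :=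
      fun t ht => congrFun he ⟨t, ht⟩
    rcases lt_or_gt_of_ne hxy with h | h
    · exact ⟨x, y, h, he'⟩
    · exact ⟨y, x, h, fun t ht => (he' t ht).symm⟩
  obtain ⟨n, rfl⟩ := Nat.exists_eq_add_of_le hij.le
  have hn : 0 < n := by omega
  have : NeZero n := ⟨hn.ne'⟩
  refine ⟨n, hn, fun x => χ ((i : ℤ) + (x.val : ℕ)), fun a c => ?_⟩
  -- The translate `a + S` lies in the window of length `2 * M + 1` starting at `a - M`.
  set r := (a - (M : ZMod n)).val with hr
  have hrn : r < n := ZMod.val_lt _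
  have ha : a = ((r + M : ℕ) : ZMod n) := by
    rw [Nat.cast_add, hr, ZMod.natCast_zmod_val, sub_add_cancel]
  obtain ⟨s, hs, hc⟩ := hχ (i + r + M) c
  refine ⟨s, hs, ?_⟩
  have hsM := hM s hs
  obtain ⟨t, ht⟩ : ∃ t : ℕ, (t : ℤ) = M + s := ⟨(M + s).toNat, by omega⟩
  have has : a + (s : ZMod n) = ((r + t : ℕ) : ZMod n) := by
    have ht' : (t : ZMod n) = M + s := by exact_mod_cast congrArg (Int.cast : ℤ → ZMod n) ht
    rw [ha]
    push_cast
    rw [ht', add_assoc]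
  have hper := eq_mod_of_window_eq χ i n (2 * M + 1) hn
    (fun u hu => by rw [hw u hu]; push_cast; rfl) (r + t) (by omega)
  change χ ((i : ℤ) + ((a + (s : ZMod n)).val : ℕ)) = c
  rw [has, ZMod.val_natCast, ← hper, ← hc]
  congr 1
  push_cast
  omega
end
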